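/- Let q be an even prime power with q ≥ 8. Then every complete k-cap in PG(3, q) with k < q² + 1 satisfies k < q² − (√5 − 1)q + 5 (so m′₂(3, q) < q² − (√5 − 1)q + 5). -/

import Mathlib

open Module

/-- Points of the projective space `PG(n, q)` over the field `F` (with `q = |F|`). -/
abbrev PGPoint (F : Type*) [Field F] (n : ℕ) := Projectivization F (Fin (n + 1) → F)

/-- The set of projective points lying in the projective subspace determined by
a linear subspace `W`. -/
def ptsIn {F : Type*} [Field F] {n : ℕ} (W : Submodule F (Fin (n + 1) → F)) :
    Set (PGPoint F n) := {P | P.submodule ≤ W}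

/-- Three points of `PG(n, q)` are collinear if they lie on a common line. -/
def Coll3 {F : Type*} [Field F] {n : ℕ} (P₁ P₂ P₃ : PGPoint F n) : Prop :=
  Module.finrank F ↥(P₁.submodule ⊔ P₂.submodule ⊔ P₃.submodule) ≤ 2

/-- A cap (a plane arc when `n = 2`): a set of points no three of which are collinear. -/
def IsCap {F : Type*} [Field F] {n : ℕ} (K : Set (PGPoint F n)) : Prop :=
  ∀ P₁ ∈ K, ∀ P₂ ∈ K, ∀ P₃ ∈ K, P₁ ≠ P₂ → P₁ ≠ P₃ → P₂ ≠ P₃ → ¬ Coll3 P₁ P₂ P₃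

/-- A complete cap: a cap that is not contained in a cap with one more point. -/
def IsCompleteCap {F : Type*} [Field F] {n : ℕ} (K : Set (PGPoint F n)) : Prop :=
  IsCap K ∧ ∀ P ∉ K, ¬ IsCap (insert P K)

/-- A tangent line of `K`: a line (2-dimensional linear subspace) meeting `K`
in exactly one point. -/
def IsTangent {F : Type*} [Field F] {n : ℕ} (K : Set (PGPoint F n))
    (W : Submodule F (Fin (n + 1) → F)) : Prop :=
  Module.finrank F W = 2 ∧ (ptsIn W ∩ K).ncard = 1



namespace CapProof
open Finset

section Pencil
variable {F : Type*} [Field F] [Fintype F] [DecidableEq F] {ι : Type*} [DecidableEq ι]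

/-- The product of all non-zero elements. -/
def wprod (F : Type*) [Field F] [Fintype F] [DecidableEq F] : F := ∏ x ∈ univ.erase (0 : F), x

lemma wprod_ne : wprod F ≠ 0 := by
  unfold wprod
  exact Finset.prod_ne_zero_iff.mpr (fun a ha => (Finset.mem_erase.mp ha).1)

lemma prod_erase_sub (s : F) : ∏ c ∈ univ.erase s, (s - c) = wprod F := by
  unfold wprod
  refine Finset.prod_nbij' (fun c => s - c) (fun c => s - c) ?_ ?_ ?_ ?_ ?_
  · intro a ha; simp only [mem_erase, mem_univ, and_true] at ha ⊢; exact sub_ne_zero.mpr (Ne.symm ha)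
  · intro a ha; simp only [mem_erase, mem_univ, and_true] at ha ⊢; intro h; apply ha; linear_combination -h
  · intro a _; ring
  · intro a _; ring
  · intro a _; rfl

/-- Lagrange identity for slopes. -/
lemma pencil_slopes (c : ι → F) (B E : Finset ι) (hEB : E ⊆ B) (hc : Set.InjOn c B)
    (hlt : Fintype.card F < #B + #E) :
    ∑ s ∈ E, (∏ a ∈ B.erase s, (c s - c a))⁻¹ * (∏ z ∈ E.erase s, (c s - c z))⁻¹ =
      (wprod F)⁻¹ * (if #B + #E = Fintype.card F + 1 then 1 else 0) := by
  classical
  set C := (univ : Finset F) \ B.image c with hC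
  have hcB : #(B.image c) = #B := Finset.card_image_of_injOn hc
  have hcard : #C + #B = Fintype.card F := by
    rw [hC, ← hcB, Finset.card_sdiff_add_card_eq_card (Finset.subset_univ _), Finset.card_univ]
  set g : Polynomial F := ∏ x ∈ C, (Polynomial.X - Polynomial.C x) with hg
  have hmon : g.Monic := Polynomial.monic_prod_of_monic _ _ (fun x _ => Polynomial.monic_X_sub_C x)
  have hdeg : g.natDegree = #C := by
    rw [hg, Polynomial.natDegree_prod_of_monic _ _ (fun x _ => Polynomial.monic_X_sub_C x)]
    simp
  have hL := Lagrange.coeff_eq_sum (s := E) (v := c) (hc.mono (by exact_mod_cast hEB)) (P := g) (by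
    rw [Polynomial.degree_eq_natDegree hmon.ne_zero, hdeg]
    exact_mod_cast (by omega : #C < #E))
  have hev : ∀ s ∈ E, g.eval (c s) = wprod F * (∏ a ∈ B.erase s, (c s - c a))⁻¹ := by
    intro s hs
    have hsB := hEB hs
    have h1 : ∏ a ∈ B.erase s, (c s - c a) = ∏ x ∈ (B.image c).erase (c s), (c s - x) := by
      have : (B.image c).erase (c s) = (B.erase s).image c := by
        ext x
        simp only [mem_erase, mem_image]
        constructor
        · rintro ⟨hx, a, ha, rfl⟩
          exact ⟨a, ⟨fun h => hx (by rw [h]), ha⟩, rfl⟩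
        · rintro ⟨a, ⟨ha1, ha2⟩, rfl⟩
          exact ⟨fun h => ha1 (hc (by exact_mod_cast ha2) (by exact_mod_cast hsB) h), a, ha2, rfl⟩
      rw [this, Finset.prod_image]
      intro x hx y hy h
      exact hc (by exact_mod_cast (mem_erase.mp hx).2) (by exact_mod_cast (mem_erase.mp hy).2) h
    have h2 : g.eval (c s) = ∏ x ∈ C, (c s - x) := by
      rw [hg, Polynomial.eval_prod]; simp
    have h3 : (∏ x ∈ C, (c s - x)) * ∏ x ∈ (B.image c).erase (c s), (c s - x) = wprod F := by
      rw [← prod_erase_sub (c s), ← Finset.prod_union]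
      · congr 1
        ext x
        have : c s ∈ B.image c := mem_image_of_mem _ hsB
        simp only [hC, mem_union, mem_sdiff, mem_univ, true_and, mem_erase, and_true]
        constructor
        · rintro (h | h)
          · intro hh; rw [hh] at h; exact h this
          · exact h.1
        · intro h
          by_cases hx : x ∈ B.image c
          · exact Or.inr ⟨h, hx⟩
          · exact Or.inl hx
      · rw [Finset.disjoint_left]
        intro x hx hx2
        simp only [hC, mem_sdiff, mem_univ, true_and] at hx
        exact hx (mem_erase.mp hx2).2
    have hne : ∏ x ∈ (B.image c).erase (c s), (c s - x) ≠ 0 :=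
      Finset.prod_ne_zero_iff.mpr (fun a ha => sub_ne_zero.mpr (Ne.symm (mem_erase.mp ha).1))
    rw [h1, h2, ← h3]
    field_simp
  have hcoeff : g.coeff (#E - 1) = if #B + #E = Fintype.card F + 1 then 1 else 0 := by
    split_ifs with h
    · have : #E - 1 = g.natDegree := by omega
      rw [this]; exact hmon
    · apply Polynomial.coeff_eq_zero_of_natDegree_lt
      omega
  rw [← hcoeff, hL, Finset.mul_sum]
  refine Finset.sum_congr rfl (fun s hs => ?_)
  rw [hev s hs]
  have := wprod_ne (F := F)
  field_simp
end Pencil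

section Det
variable {F : Type*} [Field F]

/-- explicit 3 by 3 determinant -/
def D (x y z : Fin 3 → F) : F :=
  x 0 * (y 1 * z 2 - y 2 * z 1) - x 1 * (y 0 * z 2 - y 2 * z 0) + x 2 * (y 0 * z 1 - y 1 * z 0)

lemma D_swap12 (x y z : Fin 3 → F) : D y x z = - D x y z := by unfold D; ring
lemma D_swap23 (x y z : Fin 3 → F) : D x z y = - D x y z := by unfold D; ring
lemma D_rot (x y z : Fin 3 → F) : D y z x = D x y z := by unfold D; ring
lemma plucker (e s R Q a : Fin 3 → F) :
    D e s R * D e Q a - D e a R * D e Q s = D e Q R * D e s a := by unfold D; ring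
lemma D_comb (p s Q : Fin 3 → F) (α β : F) : D p s (α • p + β • Q) = β * D p s Q := by
  unfold D; simp; ring

lemma D_smul3 (x y z : Fin 3 → F) (d : F) : D x y (d • z) = d * D x y z := by
  unfold D; simp only [Pi.smul_apply, smul_eq_mul]; ring

lemma exists_R (e Q w : Fin 3 → F) (h : D e Q w ≠ 0) : ∃ R, D e Q R = 1 :=
  ⟨(D e Q w)⁻¹ • w, by rw [D_smul3, inv_mul_cancel₀ h]⟩

variable [Fintype F] {ι : Type*} [DecidableEq ι]

lemma pencil_det (v : ι → Fin 3 → F) (e Q : Fin 3 → F) (B E : Finset ι) (hEB : E ⊆ B)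
    (hB : B.Nonempty)
    (hγ : ∀ a ∈ B, D e Q (v a) ≠ 0) (hD : ∀ a ∈ B, ∀ b ∈ B, a ≠ b → D e (v a) (v b) ≠ 0) (j : ℕ)
    (hj : #B + #E + j = Fintype.card F + 3) (hj1 : 1 ≤ j) (hj2 : j ≤ 2) :
    (∑ s ∈ E, ((∏ a ∈ B.erase s, D e (v s) (v a)) * (∏ z ∈ E.erase s, D e (v s) (v z)) *
      D e Q (v s) ^ j)⁻¹ = 0) ↔ j = 1 := by
  classical
  obtain ⟨b0, hb0⟩ := hB
  obtain ⟨R, hR⟩ := exists_R e Q _ (hγ b0 hb0)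
  set γ : ι → F := fun a => D e Q (v a) with hγd
  set c : ι → F := fun a => D e (v a) R / γ a with hcd
  have hcc : ∀ a ∈ B, ∀ b ∈ B, c a - c b = D e (v a) (v b) * (γ a * γ b)⁻¹ := by
    intro a ha b hb
    have h1 := hγ a ha
    have h2 := hγ b hb
    have h3 := plucker e (v a) R Q (v b)
    rw [hR, one_mul] at h3
    simp only [hcd, hγd]
    field_simp
    linear_combination h3
  have hinj : Set.InjOn c B := by
    intro a ha b hb h
    by_contra hne
    have h1 := hcc a ha b hb
    rw [h, sub_self] at h1
    have := mul_ne_zero (hD a ha b hb hne) (inv_ne_zero (mul_ne_zero (hγ a ha) (hγ b hb)))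
    exact this h1.symm
  have key := pencil_slopes c B E hEB hinj (by omega)
  have hΓ : ∀ (S : Finset ι), S ⊆ B → ∏ a ∈ S, γ a ≠ 0 := fun S hS =>
    Finset.prod_ne_zero_iff.mpr (fun a ha => hγ a (hS ha))
  have hprod : ∀ (S : Finset ι), S ⊆ B → ∀ s ∈ S,
      (∏ a ∈ S.erase s, (c s - c a)) * (γ s ^ #S * ∏ a ∈ S, γ a)
        = (∏ a ∈ S.erase s, D e (v s) (v a)) * γ s ^ 2 := by
    intro S hS s hs
    have h1 : ∏ a ∈ S.erase s, (c s - c a) =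
        ∏ a ∈ S.erase s, (D e (v s) (v a) * (γ s * γ a)⁻¹) :=
      Finset.prod_congr rfl (fun a ha => hcc s (hS hs) a (hS (mem_erase.mp ha).2))
    rw [h1, Finset.prod_mul_distrib, Finset.prod_inv_distrib, Finset.prod_mul_distrib,
      Finset.prod_const, ← Finset.mul_prod_erase S γ hs]
    have h2 : γ s ^ #S = γ s ^ #(S.erase s) * γ s := by
      rw [← pow_succ]; congr 1; rw [Finset.card_erase_add_one hs]
    rw [h2]
    have h3 := hΓ (S.erase s) ((erase_subset _ _).trans hS)
    have h4 : γ s ≠ 0 := hγ s (hS hs)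
    field_simp
  have hterm : ∀ s ∈ E, (∏ a ∈ B.erase s, (c s - c a))⁻¹ * (∏ z ∈ E.erase s, (c s - c z))⁻¹ =
      ((∏ a ∈ B, γ a) * (∏ a ∈ E, γ a)) * ((∏ a ∈ B.erase s, D e (v s) (v a)) *
        (∏ z ∈ E.erase s, D e (v s) (v z)) * D e Q (v s) ^ j)⁻¹ := by
    intro s hs
    have hsB := hEB hs
    have h1 := hprod B (Subset.refl _) s hsB
    have h2 := hprod E hEB s hs
    have h4 : γ s ≠ 0 := hγ s hsB
    have hpw : γ s ^ #B * γ s ^ #E * γ s ^ j = γ s ^ 4 := by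
      rw [← pow_add, ← pow_add, hj, pow_add, FiniteField.pow_card]; ring
    have hn1 : ∏ a ∈ B.erase s, (c s - c a) ≠ 0 :=
      Finset.prod_ne_zero_iff.mpr (fun a ha => sub_ne_zero.mpr (fun h =>
        (mem_erase.mp ha).1 (hinj (by exact_mod_cast (mem_erase.mp ha).2) (by exact_mod_cast hsB) h.symm)))
    have hn2 : ∏ a ∈ E.erase s, (c s - c a) ≠ 0 :=
      Finset.prod_ne_zero_iff.mpr (fun a ha => sub_ne_zero.mpr (fun h =>
        (mem_erase.mp ha).1 (hinj (by exact_mod_cast hEB (mem_erase.mp ha).2) (by exact_mod_cast hsB) h.symm)))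
    have hn3 : ∏ a ∈ B.erase s, D e (v s) (v a) ≠ 0 :=
      Finset.prod_ne_zero_iff.mpr (fun a ha => hD s hsB a (mem_erase.mp ha).2 (mem_erase.mp ha).1.symm)
    have hn4 : ∏ a ∈ E.erase s, D e (v s) (v a) ≠ 0 :=
      Finset.prod_ne_zero_iff.mpr (fun a ha => hD s hsB a (hEB (mem_erase.mp ha).2) (mem_erase.mp ha).1.symm)
    rw [← mul_inv, inv_eq_iff_eq_inv, mul_inv, inv_inv, eq_inv_mul_iff_mul_eq₀
      (mul_ne_zero (hΓ B (Subset.refl _)) (hΓ E hEB))]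
    change _ = _ * _ * γ s ^ j
    have h5 : γ s ^ 4 ≠ 0 := pow_ne_zero _ h4
    apply mul_right_cancel₀ h5
    calc _ = ((∏ a ∈ B.erase s, (c s - c a)) * (γ s ^ #B * ∏ a ∈ B, γ a)) *
          ((∏ a ∈ E.erase s, (c s - c a)) * (γ s ^ #E * ∏ a ∈ E, γ a)) * γ s ^ j := by
            rw [← hpw]; ring
      _ = _ := by rw [h1, h2]; ring
  rw [Finset.sum_congr rfl hterm, ← Finset.mul_sum] at key
  have hne := mul_ne_zero (hΓ B (Subset.refl _)) (hΓ E hEB)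
  have hw := wprod_ne (F := F)
  constructor
  · intro h0
    rw [h0, mul_zero] at key
    by_contra hj'
    rw [if_pos (by omega)] at key
    exact (mul_ne_zero (inv_ne_zero hw) one_ne_zero) key.symm
  · intro hj'
    rw [if_neg (by omega), mul_zero] at key
    exact (mul_eq_zero.mp key).resolve_left hne

lemma sum_symm_zero [CharP F 2] (E : Finset ι) (g : ι → ι → F) (hg : ∀ a b, g a b = g b a) :
    ∑ e ∈ E, ∑ s ∈ E.erase e, g e s = 0 := by
  rw [Finset.sum_sigma']
  refine Finset.sum_involution (fun x _ => ⟨x.2, x.1⟩) ?_ ?_ ?_ ?_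
  · intro x _
    simp only
    rw [hg x.2 x.1]; exact CharTwo.add_self_eq_zero _
  · intro x hx _ h
    simp only [mem_sigma, mem_erase] at hx
    apply hx.2.1
    have := congrArg Sigma.fst h
    exact this
  · intro x hx
    simp only [mem_sigma, mem_erase] at hx ⊢
    exact ⟨hx.2.2, Ne.symm hx.2.1, hx.1⟩
  · intro x _; rfl

/-- The planar lemma in coordinates. -/
lemma arc_alg [CharP F 2] (v : ι → Fin 3 → F) (Q : Fin 3 → F) (A T : Finset ι) (hTA : T ⊆ A)
    (hA : ∀ x ∈ A, ∀ y ∈ A, ∀ z ∈ A, x ≠ y → x ≠ z → y ≠ z → D (v x) (v y) (v z) ≠ 0)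
    (hcA : #A ≤ Fintype.card F + 2)
    (hTan : ∀ x ∈ T, ∀ y ∈ A, y ≠ x → D (v x) Q (v y) ≠ 0)
    (p p' : ι) (hp : p ∈ A) (hp' : p' ∈ A) (hpp : p ≠ p') (α β : F)
    (hαβ : v p' = α • v p + β • Q) : #T + #A ≤ Fintype.card F + 2 := by
  classical
  by_contra hcon
  push Not at hcon
  have hpQ : D (v p) Q (v p') = 0 := by
    rw [hαβ]; unfold D; simp; ring
  have hpT : p ∉ T := fun h => hTan p h p' hp' hpp.symm hpQ
  have hpT' : p' ∉ T := fun h => hTan p' h p hp hpp (by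
    rw [hαβ]; unfold D; simp; ring)
  obtain ⟨T', hT'T, hT'c⟩ := Finset.exists_subset_card_eq
    (s := T) (n := Fintype.card F + 3 - #A) (by omega)
  have hpT1 : p ∉ T' := fun h => hpT (hT'T h)
  set E := insert p T' with hE
  have hEc : #E = Fintype.card F + 3 - #A + 1 := by
    rw [hE, Finset.card_insert_of_notMem hpT1, hT'c]
  have hEA : E ⊆ A := Finset.insert_subset hp (hT'T.trans hTA)
  set Dd : ι → ι → F := fun e s => (∏ a ∈ (A.erase e).erase s, D (v e) (v s) (v a)) *
    (∏ z ∈ (E.erase e).erase s, D (v e) (v s) (v z)) with hDd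
  have hsw : ∀ x y z : Fin 3 → F, D y x z = D x y z := fun x y z => by
    rw [D_swap12, CharTwo.neg_eq]
  have hsw2 : ∀ x y z : Fin 3 → F, D x z y = D x y z := fun x y z => by
    rw [D_swap23, CharTwo.neg_eq]
  set g : ι → ι → F := fun e s => (Dd e s * D (v e) Q (v s) ^ 1)⁻¹ with hg
  have hgs : ∀ a b, g a b = g b a := by
    intro a b
    simp only [hg, hDd]
    have h1 : D (v a) Q (v b) = D (v b) Q (v a) := by
      rw [hsw2, hsw, hsw2]
    have h2 : ∀ S : Finset ι, ∏ x ∈ S, D (v a) (v b) (v x) = ∏ x ∈ S, D (v b) (v a) (v x) :=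
      fun S => Finset.prod_congr rfl (fun x _ => hsw _ _ _)
    rw [h1, h2, h2, Finset.erase_right_comm, Finset.erase_right_comm (s := E)]
  have htot := sum_symm_zero E g hgs
  rw [hE, Finset.sum_insert hpT1, ← hE] at htot
  have hrow : ∀ e ∈ T', ∑ s ∈ E.erase e, g e s = 0 := by
    intro e he
    have heA : e ∈ A := hTA (hT'T he)
    have heE : e ∈ E := mem_insert_of_mem he
    have := pencil_det v (v e) Q (A.erase e) (E.erase e) (Finset.erase_subset_erase _ hEA)
      ⟨p, mem_erase.mpr ⟨fun h => hpT1 (h ▸ he), hp⟩⟩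
      (fun a ha => hTan e (hT'T he) a (mem_erase.mp ha).2 (mem_erase.mp ha).1)
      (fun a ha b hb hab => hA e heA a (mem_erase.mp ha).2 b (mem_erase.mp hb).2
        (mem_erase.mp ha).1.symm (mem_erase.mp hb).1.symm hab) 1
      (by rw [Finset.card_erase_of_mem heA, Finset.card_erase_of_mem heE, hEc]
          have : 0 < #A := Finset.card_pos.mpr ⟨_, hp⟩
          omega) le_rfl (by norm_num)
    exact this.mpr rfl
  rw [Finset.sum_eq_zero hrow, add_zero] at htot
  -- the row of p
  have hEp : E.erase p = T' := by rw [hE, Finset.erase_insert hpT1]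
  have hsub : T' ⊆ (A.erase p).erase p' := by
    intro x hx
    exact mem_erase.mpr ⟨fun h => hpT' (h ▸ hT'T hx), mem_erase.mpr
      ⟨fun h => hpT1 (h ▸ hx), hTA (hT'T hx)⟩⟩
  have hT'ne : T'.Nonempty := Finset.card_pos.mp (by omega)
  have hDp : ∀ y ∈ (A.erase p).erase p', β * D (v p) Q (v y) ≠ 0 := by
    intro y hy
    simp only [mem_erase] at hy
    have := hA p hp p' hp' y hy.2.2 hpp hy.2.1.symm hy.1.symm
    rw [hsw2, hαβ, D_comb, hsw2] at this
    exact this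
  have hβ : β ≠ 0 := by
    obtain ⟨y, hy⟩ := hT'ne
    exact left_ne_zero_of_mul (hDp y (hsub hy))
  have := pencil_det v (v p) Q ((A.erase p).erase p') T' hsub (hT'ne.mono hsub)
      (fun a ha => right_ne_zero_of_mul (hDp a ha))
      (fun a ha b hb hab => by
        simp only [mem_erase] at ha hb
        exact hA p hp a ha.2.2 b hb.2.2 ha.2.1.symm hb.2.1.symm hab) 2
      (by
        have h2 : 1 < #A := Finset.one_lt_card.mpr ⟨p, hp, p', hp', hpp⟩
        rw [Finset.card_erase_of_mem (mem_erase.mpr ⟨hpp.symm, hp'⟩), Finset.card_erase_of_mem hp,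
          hT'c]
        omega) (by norm_num) le_rfl
  have hne := (not_iff_not.mpr this).mpr (by norm_num)
  apply hne
  rw [hEp] at htot
  have h3 : ∀ s ∈ T', g p s = β⁻¹ * ((∏ a ∈ ((A.erase p).erase p').erase s, D (v p) (v s) (v a)) *
      (∏ z ∈ T'.erase s, D (v p) (v s) (v z)) * D (v p) Q (v s) ^ 2)⁻¹ := by
    intro s hs
    have hs1 := mem_erase.mp (hsub hs)
    simp only [hg, hDd]
    rw [hEp, ← Finset.mul_prod_erase ((A.erase p).erase s) _ (a := p')
      (mem_erase.mpr ⟨hs1.1.symm, mem_erase.mpr ⟨hpp.symm, hp'⟩⟩), hαβ, D_comb,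
      Finset.erase_right_comm, hsw2 (v p) Q (v s), ← mul_inv]
    congr 1
    ring
  rw [Finset.sum_congr rfl h3, ← Finset.mul_sum] at htot
  exact (mul_eq_zero.mp htot).resolve_left (inv_ne_zero hβ)

end Det
end CapProof


namespace CapProof
open Finset

/-- The incidence facts about `PG(3,q)` that are used in the counting argument. -/
structure Geo (α : Type*) [Fintype α] [DecidableEq α] (q : ℕ) where
  Ln : Finset (Finset α)
  Pl : Finset (Finset α)
  ln : α → α → Finset α
  card_all : Fintype.card α = q ^ 3 + q ^ 2 + q + 1
  ln_mem : ∀ P Q, P ≠ Q → ln P Q ∈ Ln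
  left_mem : ∀ P Q, P ∈ ln P Q
  right_mem : ∀ P Q, Q ∈ ln P Q
  ln_unique : ∀ l ∈ Ln, ∀ P ∈ l, ∀ Q ∈ l, P ≠ Q → l = ln P Q
  ln_sub : ∀ π ∈ Pl, ∀ P ∈ π, ∀ Q ∈ π, P ≠ Q → ln P Q ⊆ π
  card_ln : ∀ l ∈ Ln, #l = q + 1
  card_pl : ∀ π ∈ Pl, #π = q ^ 2 + q + 1
  pl_thru : ∀ l ∈ Ln, #{π ∈ Pl | l ⊆ π} = q + 1
  pl_unique : ∀ l ∈ Ln, ∀ P, P ∉ l → #{π ∈ Pl | l ⊆ π ∧ P ∈ π} = 1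
  meet : ∀ π ∈ Pl, ∀ l ∈ Ln, ∀ m ∈ Ln, l ⊆ π → m ⊆ π → ∃ P ∈ l, P ∈ m
  pl_meet : ∀ π ∈ Pl, ∀ π' ∈ Pl, π ≠ π' → π ∩ π' ∈ Ln

variable {α : Type*} [Fintype α] [DecidableEq α] {q : ℕ}

namespace Geo
variable (G : Geo α q)

lemma ln_comm (P Q : α) (h : P ≠ Q) : G.ln P Q = G.ln Q P :=
  G.ln_unique _ (G.ln_mem P Q h) _ (G.right_mem _ _) _ (G.left_mem _ _) h.symm

/-- line through P and a point of the line PQ -/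
lemma ln_eq {P Q R : α} (h : P ≠ Q) (hR : R ∈ G.ln P Q) (hRP : R ≠ P) : G.ln P R = G.ln P Q :=
  (G.ln_unique _ (G.ln_mem P Q h) _ (G.left_mem _ _) _ hR hRP.symm).symm

lemma mem_swap {P Q R : α} (h : P ≠ Q) (hR : R ∈ G.ln P Q) (hRP : R ≠ P) : Q ∈ G.ln P R := by
  rw [G.ln_eq h hR hRP]; exact G.right_mem _ _

/-- closed under joining -/
def Flat (W : Finset α) : Prop := ∀ P ∈ W, ∀ Q ∈ W, P ≠ Q → G.ln P Q ⊆ W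

lemma flat_univ : G.Flat univ := fun _ _ _ _ _ => subset_univ _
lemma flat_pl {π : Finset α} (h : π ∈ G.Pl) : G.Flat π := G.ln_sub π h
lemma flat_ln {l : Finset α} (h : l ∈ G.Ln) : G.Flat l := fun P hP Q hQ hPQ => by
  rw [← G.ln_unique l h P hP Q hQ hPQ]

/-- Pencil of planes. -/
lemma sum_pl (l : Finset α) (hl : l ∈ G.Ln) (S : Finset α) :
    ∑ π ∈ G.Pl with l ⊆ π, #(S ∩ π) = #S + q * #(S ∩ l) := by
  have h1 : ∀ π : Finset α, #(S ∩ π) = ∑ x ∈ S, if x ∈ π then 1 else 0 := by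
    intro π
    rw [← Finset.filter_mem_eq_inter, Finset.card_filter]
  simp_rw [h1]
  rw [Finset.sum_comm]
  have h2 : ∀ x ∈ S, (∑ π ∈ G.Pl with l ⊆ π, if x ∈ π then 1 else 0)
      = 1 + q * (if x ∈ l then 1 else 0) := by
    intro x _
    rw [← Finset.card_filter, Finset.filter_filter]
    by_cases hx : x ∈ l
    · have : (G.Pl.filter fun π => l ⊆ π ∧ x ∈ π) = G.Pl.filter fun π => l ⊆ π := by
        apply Finset.filter_congr
        intro π _
        exact ⟨fun h => h.1, fun h => ⟨h, h hx⟩⟩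
      rw [this, G.pl_thru l hl]; simp [hx]; ring
    · rw [G.pl_unique l hl x hx]; simp [hx]
  rw [Finset.sum_congr rfl h2, Finset.sum_add_distrib, ← Finset.mul_sum, ← Finset.card_filter]
  simp

variable (K : Finset α)

/-- `P` is the only point of `K` on the line `QP`. -/
def Tan (Q P : α) : Prop := ∀ R ∈ K, R ≠ P → Q ∉ G.ln P R

open Classical in
/-- number of tangents from Q inside W -/
noncomputable def aa (W : Finset α) (Q : α) : ℕ := #{P ∈ K ∩ W | G.Tan K Q P}

/-- no three collinear -/
def Cap : Prop := ∀ P ∈ K, ∀ R ∈ K, ∀ S ∈ K, P ≠ R → P ≠ S → R ≠ S → S ∉ G.ln P R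

variable {K}

lemma aa_le (W : Finset α) (Q : α) : G.aa K W Q ≤ #(K ∩ W) := by
  classical
  exact Finset.card_filter_le _ _

/-- partner on a secant is unique -/
lemma partner_unique (hK : G.Cap K) {P R S Q : α} (hP : P ∈ K) (hR : R ∈ K) (hS : S ∈ K)
    (hQ : Q ∉ K) (hRP : R ≠ P) (hSP : S ≠ P) (h1 : Q ∈ G.ln P R) (h2 : Q ∈ G.ln P S) : R = S := by
  by_contra hne
  have hQP : Q ≠ P := fun h => hQ (h ▸ hP)
  have h3 := G.ln_eq hRP.symm h1 hQP
  have h4 := G.mem_swap hSP.symm h2 hQP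
  rw [h3] at h4
  exact hK P hP R hR S hS hRP.symm hSP.symm hne h4

/-- a flat containing P and Q contains the partner -/
lemma partner_mem {W : Finset α} (hW : G.Flat W) {P R Q : α} (hP : P ∈ W) (hQ : Q ∈ W) (hQP : Q ≠ P)
    (hRP : R ≠ P) (h1 : Q ∈ G.ln P R) : R ∈ W :=
  hW P hP Q hQ hQP.symm (G.mem_swap hRP.symm h1 hQP)

/-- number of ordered secant pairs through Q in W -/
lemma nontan_card (hK : G.Cap K) {W : Finset α} (hW : G.Flat W) {Q : α} (hQW : Q ∈ W) (hQ : Q ∉ K) :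
    #{x ∈ (K ∩ W).offDiag | Q ∈ G.ln x.1 x.2} + G.aa K W Q = #(K ∩ W) := by
  classical
  unfold aa
  rw [← Finset.card_filter_add_card_filter_not (s := K ∩ W) (fun P => G.Tan K Q P), add_comm]
  congr 1
  refine Finset.card_bij (fun x _ => x.1) ?_ ?_ ?_
  · rintro ⟨P, R⟩ hx
    simp only [mem_filter, mem_offDiag, mem_inter] at hx ⊢
    refine ⟨hx.1.1, fun h => h R hx.1.2.1.1 (Ne.symm hx.1.2.2) hx.2⟩
  · rintro ⟨P, R⟩ hx ⟨P', R'⟩ hx' h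
    simp only [mem_filter, mem_offDiag, mem_inter] at hx hx' h
    subst h
    rw [G.partner_unique hK hx.1.1.1 hx.1.2.1.1 hx'.1.2.1.1 hQ (Ne.symm hx.1.2.2)
      (Ne.symm hx'.1.2.2) hx.2 hx'.2]
  · intro P hP
    simp only [mem_filter, mem_inter] at hP
    have := hP.2
    unfold Tan at this
    push Not at this
    obtain ⟨R, hR, hRP, hQR⟩ := this
    refine ⟨(P, R), ?_, rfl⟩
    simp only [mem_filter, mem_offDiag, mem_inter]
    exact ⟨⟨hP.1, ⟨hR, G.partner_mem hW hP.1.2 hQW (fun h => hQ (h ▸ hP.1.1)) hRP hQR⟩,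
      hRP.symm⟩, hQR⟩

/-- parity -/
lemma parity (hK : G.Cap K) {W : Finset α} (hW : G.Flat W) {Q : α} (hQW : Q ∈ W) (hQ : Q ∉ K) :
    ∃ m, G.aa K W Q + 2 * m = #(K ∩ W) := by
  classical
  have h := G.nontan_card hK hW hQW hQ
  have he : ((#{x ∈ (K ∩ W).offDiag | Q ∈ G.ln x.1 x.2} : ℕ) : ZMod 2) = 0 := by
    rw [Finset.card_eq_sum_ones, Nat.cast_sum]
    refine Finset.sum_involution (fun x _ => (x.2, x.1)) ?_ ?_ ?_ ?_
    · intro x _; decide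
    · rintro ⟨P, R⟩ hx _ h
      simp only [mem_filter, mem_offDiag, mem_inter] at hx
      exact hx.1.2.2 (congrArg Prod.fst h).symm
    · rintro ⟨P, R⟩ hx
      simp only [mem_filter, mem_offDiag, mem_inter] at hx ⊢
      refine ⟨⟨hx.1.2.1, hx.1.1, hx.1.2.2.symm⟩, ?_⟩
      rw [G.ln_comm R P hx.1.2.2.symm]; exact hx.2
    · intro x _; rfl
  rw [ZMod.natCast_eq_zero_iff] at he
  obtain ⟨m, hm⟩ := he
  exact ⟨m, by omega⟩

open Classical in
/-- tangent points at P inside W -/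
lemma tan_card (hK : G.Cap K) {W : Finset α} (hW : G.Flat W) {P : α} (hP : P ∈ K) (hPW : P ∈ W) :
    #{Q ∈ W \ K | G.Tan K Q P} + q * #(K ∩ W) + 1 = #W + q := by
  have h1 : (W.erase P).filter (fun Q => ¬ G.Tan K Q P) =
      ((K ∩ W).erase P).biUnion (fun R => (G.ln P R).erase P) := by
    ext Q
    rw [mem_filter]
    simp only [mem_erase, mem_biUnion, mem_inter]
    unfold Tan
    push Not
    constructor
    · rintro ⟨⟨hQP, hQW⟩, R, hR, hRP, h⟩
      exact ⟨R, ⟨hRP, hR, G.partner_mem hW hPW hQW hQP hRP h⟩, hQP, h⟩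
    · rintro ⟨R, ⟨hRP, hR, hRW⟩, hQP, h⟩
      exact ⟨⟨hQP, hW P hPW R hRW hRP.symm h⟩, R, hR, hRP, h⟩
  have h2 : #((W.erase P).filter (fun Q => ¬ G.Tan K Q P)) = (#(K ∩ W) - 1) * q := by
    rw [h1, Finset.card_biUnion]
    · rw [Finset.sum_congr rfl (g := fun _ => q), Finset.sum_const,
        Finset.card_erase_of_mem (mem_inter.mpr ⟨hP, hPW⟩), smul_eq_mul]
      intro R hR
      rw [Finset.card_erase_of_mem (G.left_mem _ _),
        G.card_ln _ (G.ln_mem P R (mem_erase.mp hR).1.symm)]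
      rfl
    · intro R hR S hS hRS
      simp only [mem_erase, mem_inter, mem_coe] at hR hS
      rw [Function.onFun, Finset.disjoint_left]
      intro Q hQ1 hQ2
      simp only [mem_erase] at hQ1 hQ2
      have h3 := G.ln_eq hR.1.symm hQ1.2 hQ1.1
      have h4 := G.mem_swap hS.1.symm hQ2.2 hQ2.1
      rw [h3] at h4
      exact hK P hP R hR.2.1 S hS.2.1 hR.1.symm hS.1.symm hRS h4
  have h3 : (W \ K).filter (fun Q => G.Tan K Q P) = (W.erase P).filter (fun Q => G.Tan K Q P) := by
    ext Q
    simp only [mem_filter, mem_sdiff, mem_erase]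
    constructor
    · rintro ⟨⟨h1, h2⟩, h3⟩
      exact ⟨⟨fun h => h2 (h ▸ hP), h1⟩, h3⟩
    · rintro ⟨⟨h1, h2⟩, h3⟩
      exact ⟨⟨h2, fun h => h3 Q h h1 (G.right_mem _ _)⟩, h3⟩
  have h4 := Finset.card_filter_add_card_filter_not (s := W.erase P) (fun Q => G.Tan K Q P)
  rw [h2, Finset.card_erase_of_mem hPW] at h4
  rw [h3]
  have h5 : 0 < #W := Finset.card_pos.mpr ⟨_, hPW⟩
  have h6 : 0 < #(K ∩ W) := Finset.card_pos.mpr ⟨_, mem_inter.mpr ⟨hP, hPW⟩⟩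
  obtain ⟨m, hm⟩ : ∃ m, #(K ∩ W) = m + 1 := ⟨#(K ∩ W) - 1, by omega⟩
  rw [hm] at h4 ⊢
  simp only [Nat.add_sub_cancel] at h4
  have h7 : q * (m + 1) = m * q + q := by ring
  omega

open Classical in
/-- total number of tangents in W -/
lemma sum_aa (hK : G.Cap K) {W : Finset α} (hW : G.Flat W) :
    ∑ Q ∈ W \ K, (G.aa K W Q : ℤ) = #(K ∩ W) * ((#W : ℤ) + q - 1 - q * #(K ∩ W)) := by
  have h1 : ∑ Q ∈ W \ K, (G.aa K W Q) = ∑ P ∈ K ∩ W, #{Q ∈ W \ K | G.Tan K Q P} := by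
    unfold aa
    simp_rw [Finset.card_filter]
    rw [Finset.sum_comm]
  have h2 : ∀ P ∈ K ∩ W, ((#{Q ∈ W \ K | G.Tan K Q P} : ℕ) : ℤ) = (#W : ℤ) + q - 1 - q * #(K ∩ W) := by
    intro P hP
    have := G.tan_card hK hW (mem_inter.mp hP).1 (mem_inter.mp hP).2
    have : ((#{Q ∈ W \ K | G.Tan K Q P} + q * #(K ∩ W) + 1 : ℕ) : ℤ) = ((#W + q : ℕ) : ℤ) := by
      rw [this]
    push_cast at this
    linarith
  rw [← Nat.cast_sum, h1, Nat.cast_sum, Finset.sum_congr rfl h2, Finset.sum_const, nsmul_eq_mul]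

lemma plane_le (hK : G.Cap K) (hq : 0 < q) {π : Finset α} (hπ : π ∈ G.Pl) : #(K ∩ π) ≤ q + 2 := by
  classical
  rcases (K ∩ π).eq_empty_or_nonempty with h | ⟨P, hP⟩
  · rw [h]; simp
  · have := G.tan_card hK (G.flat_pl hπ) (mem_inter.mp hP).1 (mem_inter.mp hP).2
    rw [G.card_pl π hπ] at this
    have h2 : q * #(K ∩ π) ≤ q * (q + 2) := by nlinarith
    exact Nat.le_of_mul_le_mul_left h2 hq

/-- two lines meet in at most one point -/
lemma ln_inter {l m : Finset α} (hl : l ∈ G.Ln) (hm : m ∈ G.Ln) {P Q : α} (hPQ : P ≠ Q) (h1 : P ∈ l)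
    (h2 : Q ∈ l) (h3 : P ∈ m) (h4 : Q ∈ m) : l = m := by
  rw [G.ln_unique l hl P h1 Q h2 hPQ, G.ln_unique m hm P h3 Q h4 hPQ]

/-- Projection count -/
lemma proj_card (hK : G.Cap K) {π : Finset α} (hπ : π ∈ G.Pl) {l : Finset α} (hl : l ∈ G.Ln)
    (hlπ : l ⊆ π) {S : α} (hS : S ∈ K) (hSπ : S ∈ π) (hSl : S ∉ l) [DecidablePred fun Q => G.Tan K Q S] :
    #{Q ∈ l | G.Tan K Q S} + #(K ∩ π) = q + 2 := by
  classical
  have h0 := Finset.card_filter_add_card_filter_not (s := l) (fun Q => G.Tan K Q S)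
  have h1 : #{Q ∈ l | ¬ G.Tan K Q S} = #((K ∩ π).erase S) := by
    symm
    have hex : ∀ R ∈ (K ∩ π).erase S, ∃ P ∈ l, P ∈ G.ln S R := by
      intro R hR
      simp only [mem_erase, mem_inter] at hR
      exact G.meet π hπ l hl _ (G.ln_mem S R hR.1.symm) hlπ (G.ln_sub π hπ S hSπ R hR.2.2 hR.1.symm)
    choose! f hf1 hf2 using hex
    refine Finset.card_bij (fun R _ => f R) ?_ ?_ ?_
    · intro R hR
      have h1 := hf1 R hR
      have h2 := hf2 R hR
      simp only [mem_erase, mem_inter] at hR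
      simp only [mem_filter]
      exact ⟨h1, fun h => h R hR.2.1 hR.1 h2⟩
    · intro R hR R' hR' h
      have h1 := hf1 R hR
      have h2 := hf2 R hR
      have h3 := hf2 R' hR'
      rw [← h] at h3
      simp only [mem_erase, mem_inter] at hR hR'
      have hne : f R ≠ S := fun h => hSl (h ▸ h1)
      by_contra hRR
      have h5 := G.ln_eq hR.1.symm h2 hne
      have h4 := G.mem_swap hR'.1.symm h3 hne
      rw [h5] at h4
      exact hK S hS R hR.2.1 R' hR'.2.1 hR.1.symm hR'.1.symm hRR h4
    · intro Q hQ
      obtain ⟨hQl, hQ⟩ := mem_filter.mp hQ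
      unfold Tan at hQ
      push Not at hQ
      obtain ⟨R, hR, hRS, hQR⟩ := hQ
      have hQS : Q ≠ S := fun h => hSl (h ▸ hQl)
      have hRm : R ∈ (K ∩ π).erase S := by
        simp only [mem_erase, mem_inter]
        exact ⟨hRS, hR, G.partner_mem (G.flat_pl hπ) hSπ (hlπ hQl) hQS hRS hQR⟩
      refine ⟨R, hRm, ?_⟩
      by_contra hne
      have h1 := hf1 R hRm
      have h2 := hf2 R hRm
      have := G.ln_inter hl (G.ln_mem S R hRS.symm) hne h1 hQl h2 hQR
      exact hSl (this ▸ G.left_mem _ _)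
  rw [h1, Finset.card_erase_of_mem (mem_inter.mpr ⟨hS, hSπ⟩), G.card_ln l hl] at h0
  have : 0 < #(K ∩ π) := Finset.card_pos.mpr ⟨S, mem_inter.mpr ⟨hS, hSπ⟩⟩
  omega

/-- a secant contains exactly two points of K -/
lemma sec_inter (hK : G.Cap K) {P R : α} (hP : P ∈ K) (hR : R ∈ K) (hPR : P ≠ R) :
    K ∩ G.ln P R = {P, R} := by
  ext S
  simp only [mem_inter, mem_insert, mem_singleton]
  constructor
  · rintro ⟨h1, h2⟩
    by_contra h
    push Not at h
    exact hK P hP R hR S h1 hPR h.1.symm h.2.symm h2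
  · rintro (h | h)
    · subst h; exact ⟨hP, G.left_mem _ _⟩
    · subst h; exact ⟨hR, G.right_mem _ _⟩

lemma sec_not_tan {P R Q : α} (hP : P ∈ K) (hR : R ∈ K) (hPR : P ≠ R) (hQ : Q ∈ G.ln P R) :
    ¬ G.Tan K Q P ∧ ¬ G.Tan K Q R :=
  ⟨fun h => h R hR hPR.symm hQ, fun h => h P hP hPR (by rw [G.ln_comm R P hPR.symm]; exact hQ)⟩

/-- Sum of a over a secant in a plane. -/
lemma sum_aa_sec (hK : G.Cap K) {π : Finset α} (hπ : π ∈ G.Pl) {P R : α} (hP : P ∈ K) (hR : R ∈ K)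
    (hPR : P ≠ R) (hl : G.ln P R ⊆ π) :
    ∑ Q ∈ G.ln P R \ K, (G.aa K π Q : ℤ) = (#(K ∩ π) - 2) * (q + 2 - #(K ∩ π)) := by
  classical
  have hlm := G.ln_mem P R hPR
  have h1 : ∑ Q ∈ G.ln P R \ K, (G.aa K π Q) =
      ∑ S ∈ (K ∩ π) \ G.ln P R, #{Q ∈ G.ln P R | G.Tan K Q S} := by
    have : ∀ Q ∈ G.ln P R \ K, G.aa K π Q = #{S ∈ (K ∩ π) \ G.ln P R | G.Tan K Q S} := by
      intro Q hQ
      simp only [mem_sdiff] at hQ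
      unfold aa
      congr 1
      ext S
      simp only [mem_filter, mem_sdiff, mem_inter]
      constructor
      · rintro ⟨⟨h1, h2⟩, h3⟩
        refine ⟨⟨⟨h1, h2⟩, fun h => ?_⟩, h3⟩
        have : S ∈ K ∩ G.ln P R := mem_inter.mpr ⟨h1, h⟩
        rw [G.sec_inter hK hP hR hPR] at this
        have h5 := G.sec_not_tan hP hR hPR hQ.1
        rcases mem_insert.mp this with h | h
        · exact h5.1 (h ▸ h3)
        · exact h5.2 (mem_singleton.mp h ▸ h3)
      · rintro ⟨⟨h1, h2⟩, h3⟩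
        exact ⟨h1, h3⟩
    rw [Finset.sum_congr rfl this]
    simp_rw [Finset.card_filter]
    rw [Finset.sum_comm]
    refine Finset.sum_congr rfl (fun S hS => ?_)
    simp only [mem_sdiff, mem_inter] at hS
    refine Finset.sum_subset sdiff_subset ?_
    intro Q hQ hQ2
    simp only [mem_sdiff, not_and, not_not] at hQ2
    rw [if_neg]
    intro h
    exact h Q (hQ2 hQ) (fun h => hS.2 (h ▸ hQ)) (G.right_mem _ _)
  have h2 : ∀ S ∈ (K ∩ π) \ G.ln P R, ((#{Q ∈ G.ln P R | G.Tan K Q S} : ℕ) : ℤ) = q + 2 - #(K ∩ π) := by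
    intro S hS
    simp only [mem_sdiff, mem_inter] at hS
    have := G.proj_card hK hπ hlm hl hS.1.1 hS.1.2 hS.2
    have : ((#{Q ∈ G.ln P R | G.Tan K Q S} + #(K ∩ π) : ℕ) : ℤ) = ((q + 2 : ℕ) : ℤ) := by rw [this]
    push_cast at this
    linarith
  have h3 : (#((K ∩ π) \ G.ln P R) : ℤ) = #(K ∩ π) - 2 := by
    have hs : K ∩ G.ln P R ⊆ K ∩ π := Finset.inter_subset_inter_left hl
    have : (K ∩ π) \ G.ln P R = (K ∩ π) \ (K ∩ G.ln P R) := by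
      ext x; simp only [mem_sdiff, mem_inter]; tauto
    rw [this, Finset.cast_card_sdiff hs, G.sec_inter hK hP hR hPR, Finset.card_pair hPR]; rfl
  rw [← Nat.cast_sum, h1, Nat.cast_sum, Finset.sum_congr rfl h2, Finset.sum_const, nsmul_eq_mul, h3]

end Geo
end CapProof


namespace CapProof
open Finset
variable {α : Type*} [Fintype α] [DecidableEq α] {q : ℕ}
namespace Geo
variable (G : Geo α q) (K : Finset α)

/-- Standing hypotheses. -/
structure Hyp : Prop where
  cap : G.Cap K
  compl : ∀ Q, Q ∉ K → ∃ P ∈ K, ∃ R ∈ K, P ≠ R ∧ Q ∈ G.ln P R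
  p1 : ∀ π ∈ G.Pl, ∀ Q ∈ π, Q ∉ K → ∀ P ∈ K, ∀ R ∈ K, P ≠ R → P ∈ π → R ∈ π → Q ∈ G.ln P R →
    G.aa K π Q + #(K ∩ π) ≤ q + 2
  qpos : 2 < q
  qeven : Even q

/-- `t` -/
def tt (_ : Geo α q) : ℤ := (q : ℤ) ^ 2 + q + 2 - #K
/-- `t_π` -/
def tp (_ : Geo α q) (π : Finset α) : ℤ := (q : ℤ) + 2 - #(K ∩ π)
/-- `δ(Q)` -/
noncomputable def dl (Q : α) : ℤ := G.tt K - G.aa K univ Q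
/-- planes through l -/
def thr (l : Finset α) : Finset (Finset α) := {π ∈ G.Pl | l ⊆ π}

variable {K}

lemma mem_thr {l π : Finset α} : π ∈ G.thr l ↔ π ∈ G.Pl ∧ l ⊆ π := by
  unfold thr; rw [mem_filter]

lemma card_thr {l : Finset α} (hl : l ∈ G.Ln) : #(G.thr l) = q + 1 := G.pl_thru l hl

lemma sum_thr {l : Finset α} (hl : l ∈ G.Ln) (S : Finset α) :
    ∑ π ∈ G.thr l, (#(S ∩ π) : ℤ) = #S + q * #(S ∩ l) := by
  exact_mod_cast G.sum_pl l hl S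

lemma sum_aa_thr {l : Finset α} (hl : l ∈ G.Ln) (Q : α) :
    ∑ π ∈ G.thr l, (G.aa K π Q : ℤ) = G.aa K univ Q + q * G.aa K l Q := by
  classical
  have h : ∀ W : Finset α, G.aa K W Q = #({P ∈ K | G.Tan K Q P} ∩ W) := by
    intro W
    unfold aa
    congr 1
    ext P
    simp only [mem_filter, mem_inter]
    tauto
  simp_rw [h]
  rw [G.sum_thr hl]
  simp

lemma aa_sec (hK : G.Cap K) {P R Q : α} (hP : P ∈ K) (hR : R ∈ K) (hPR : P ≠ R)
    (hQ : Q ∈ G.ln P R) : G.aa K (G.ln P R) Q = 0 := by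
  classical
  unfold aa
  rw [G.sec_inter hK hP hR hPR, Finset.card_eq_zero, Finset.filter_eq_empty_iff]
  have := G.sec_not_tan hP hR hPR hQ
  intro S hS
  rcases mem_insert.mp hS with h | h
  · rw [h]; exact this.1
  · rw [mem_singleton.mp h]; exact this.2

lemma sum_tp_thr {l : Finset α} (hl : l ∈ G.Ln) :
    ∑ π ∈ G.thr l, G.tp K π = G.tt K + 2 * q - q * #(K ∩ l) := by
  unfold tp tt
  rw [Finset.sum_sub_distrib, G.sum_thr hl, Finset.sum_const, G.card_thr hl, nsmul_eq_mul]
  push_cast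
  ring

lemma sum_tp_sec (hK : G.Cap K) {P R : α} (hP : P ∈ K) (hR : R ∈ K) (hPR : P ≠ R) :
    ∑ π ∈ G.thr (G.ln P R), G.tp K π = G.tt K := by
  rw [G.sum_tp_thr (G.ln_mem _ _ hPR), G.sec_inter hK hP hR hPR, Finset.card_pair hPR]
  push_cast; ring

lemma dl_sec (hK : G.Cap K) {P R Q : α} (hP : P ∈ K) (hR : R ∈ K) (hPR : P ≠ R)
    (hQ : Q ∈ G.ln P R) : G.dl K Q = ∑ π ∈ G.thr (G.ln P R), (G.tp K π - G.aa K π Q) := by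
  rw [Finset.sum_sub_distrib, G.sum_tp_sec hK hP hR hPR, G.sum_aa_thr (G.ln_mem _ _ hPR),
    G.aa_sec hK hP hR hPR hQ]
  unfold dl; simp

lemma dl_nonneg (H : G.Hyp K) {Q : α} (hQ : Q ∉ K) : 0 ≤ G.dl K Q := by
  obtain ⟨P, hP, R, hR, hPR, hQR⟩ := H.compl Q hQ
  rw [G.dl_sec H.cap hP hR hPR hQR]
  apply Finset.sum_nonneg
  intro π hπ
  rw [mem_thr] at hπ
  have := H.p1 π hπ.1 Q (hπ.2 hQR) hQ P hP R hR hPR (hπ.2 (G.left_mem _ _))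
    (hπ.2 (G.right_mem _ _)) hQR
  unfold tp
  zify at this
  linarith

lemma card_sec_sdiff (hK : G.Cap K) {P R : α} (hP : P ∈ K) (hR : R ∈ K) (hPR : P ≠ R) :
    (#(G.ln P R \ K) : ℤ) = q - 1 := by
  have h := Finset.card_sdiff_add_card_inter (G.ln P R) K
  rw [Finset.inter_comm, G.sec_inter hK hP hR hPR, Finset.card_pair hPR,
    G.card_ln _ (G.ln_mem _ _ hPR)] at h
  zify at h
  linarith

lemma sum_tp_sub_aa (hK : G.Cap K) {π : Finset α} (hπ : π ∈ G.Pl) {P R : α} (hP : P ∈ K) (hR : R ∈ K)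
    (hPR : P ≠ R) (hl : G.ln P R ⊆ π) :
    ∑ Q ∈ G.ln P R \ K, (G.tp K π - G.aa K π Q) = G.tp K π * (G.tp K π - 1) := by
  rw [Finset.sum_sub_distrib, Finset.sum_const, G.sum_aa_sec hK hπ hP hR hPR hl, nsmul_eq_mul,
    G.card_sec_sdiff hK hP hR hPR]
  unfold tp; ring

lemma sum_dl_sec (hK : G.Cap K) {P R : α} (hP : P ∈ K) (hR : R ∈ K) (hPR : P ≠ R) :
    ∑ Q ∈ G.ln P R \ K, G.dl K Q = ∑ π ∈ G.thr (G.ln P R), G.tp K π * (G.tp K π - 1) := by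
  rw [Finset.sum_congr rfl (fun Q hQ => G.dl_sec hK hP hR hPR (mem_sdiff.mp hQ).1), Finset.sum_comm]
  refine Finset.sum_congr rfl (fun π hπ => ?_)
  rw [mem_thr] at hπ
  exact G.sum_tp_sub_aa hK hπ.1 hP hR hPR hπ.2

/-- generic double counting over secants -/
lemma double_count (hK : G.Cap K) {W : Finset α} (hW : G.Flat W) (g : α → ℤ) :
    ∑ Q ∈ W \ K, g Q * (#(K ∩ W) - G.aa K W Q) =
      ∑ x ∈ (K ∩ W).offDiag, ∑ Q ∈ G.ln x.1 x.2 \ K, g Q := by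
  have h1 : ∀ Q ∈ W \ K, g Q * (#(K ∩ W) - G.aa K W Q) =
      ∑ x ∈ (K ∩ W).offDiag, if Q ∈ G.ln x.1 x.2 then g Q else 0 := by
    intro Q hQ
    rw [mem_sdiff] at hQ
    have := G.nontan_card hK hW hQ.1 hQ.2
    rw [← Finset.sum_filter, Finset.sum_const, nsmul_eq_mul]
    zify at this
    rw [← this]; ring
  rw [Finset.sum_congr rfl h1, Finset.sum_comm]
  refine Finset.sum_congr rfl (fun x hx => ?_)
  simp only [mem_offDiag, mem_inter] at hx
  rw [← Finset.sum_filter]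
  refine Finset.sum_congr ?_ (fun _ _ => rfl)
  ext Q
  simp only [mem_filter, mem_sdiff]
  constructor
  · rintro ⟨⟨_, h2⟩, h3⟩; exact ⟨h3, h2⟩
  · rintro ⟨h1, h2⟩; exact ⟨⟨hW _ hx.1.2 _ hx.2.1.2 hx.2.2 h1, h2⟩, h1⟩

lemma main1 (hK : G.Cap K) :
    ∑ Q ∈ univ \ K, G.dl K Q * (#K - G.aa K univ Q) =
      ∑ x ∈ K.offDiag, ∑ π ∈ G.thr (G.ln x.1 x.2), G.tp K π * (G.tp K π - 1) := by
  have := G.double_count hK G.flat_univ (G.dl K)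
  rw [Finset.inter_univ] at this
  rw [this]
  refine Finset.sum_congr rfl (fun x hx => ?_)
  rw [mem_offDiag] at hx
  exact G.sum_dl_sec hK hx.1 hx.2.1 hx.2.2

lemma card_off (G : Geo α q) (K : Finset α) : (#(univ \ K) : ℤ) = (q : ℤ) ^ 3 + q ^ 2 + q + 1 - #K := by
  rw [Finset.cast_card_sdiff (subset_univ _), Finset.card_univ, G.card_all]; push_cast; ring

lemma sum_dl (hK : G.Cap K) :
    ∑ Q ∈ univ \ K, G.dl K Q = G.tt K * (q + 1) * ((q : ℤ) ^ 2 + 1 - #K) := by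
  unfold dl
  rw [Finset.sum_sub_distrib, G.sum_aa hK G.flat_univ, Finset.sum_const, nsmul_eq_mul, G.card_off K,
    Finset.inter_univ, Finset.card_univ, G.card_all]
  unfold tt; push_cast; ring

/-- `S2` -/
noncomputable def S2 (G : Geo α q) (K : Finset α) : ℤ := ∑ Q ∈ univ \ K, G.dl K Q * G.aa K univ Q

lemma main2 (hK : G.Cap K) :
    ∑ x ∈ K.offDiag, ∑ π ∈ G.thr (G.ln x.1 x.2), G.tp K π * (G.tp K π - 1) =
      #K * (G.tt K * (q + 1) * ((q : ℤ) ^ 2 + 1 - #K)) - G.S2 K := by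
  rw [← G.main1 hK, ← G.sum_dl hK, Finset.mul_sum]
  unfold S2
  rw [← Finset.sum_sub_distrib]
  exact Finset.sum_congr rfl (fun _ _ => by ring)

lemma card_offDiag' {β : Type*} [DecidableEq β] (S : Finset β) : (#S.offDiag : ℤ) = #S * (#S - 1) := by
  have h := Finset.offDiag_card S
  have h2 : #S ≤ #S * #S := Nat.le_mul_self _
  rw [h]; push_cast [h2]; ring

lemma I1 (hK : G.Cap K) : 2 * (#K * (#K - 1) * ((q : ℤ) ^ 2 + 1 - #K)) ≤
      #K * (G.tt K * (q + 1) * ((q : ℤ) ^ 2 + 1 - #K)) - G.S2 K := by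
  rw [← G.main2 hK, ← card_offDiag']
  have : ∀ x ∈ K.offDiag, 2 * ((q : ℤ) ^ 2 + 1 - #K) ≤
      ∑ π ∈ G.thr (G.ln x.1 x.2), G.tp K π * (G.tp K π - 1) := by
    intro x hx
    rw [mem_offDiag] at hx
    have h1 : ∑ π ∈ G.thr (G.ln x.1 x.2), (2 * G.tp K π - 2) = 2 * ((q : ℤ) ^ 2 + 1 - #K) := by
      rw [Finset.sum_sub_distrib, ← Finset.mul_sum, G.sum_tp_sec hK hx.1 hx.2.1 hx.2.2,
        Finset.sum_const, G.card_thr (G.ln_mem _ _ hx.2.2), nsmul_eq_mul]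
      unfold tt; push_cast; ring
    rw [← h1]
    apply Finset.sum_le_sum
    intro π _
    rcases le_or_gt (G.tp K π) 1 with h | h <;> nlinarith
  have h3 := Finset.card_nsmul_le_sum _ _ _ this
  rw [nsmul_eq_mul] at h3
  linarith

/-- planes with q points -/
def qpl (G : Geo α q) (K : Finset α) : Finset (Finset α) := {π ∈ G.Pl | #(K ∩ π) = q}

lemma I2 (hK : G.Cap K) : 3 * (#K * (#K - 1) * ((q : ℤ) ^ 2 + 1 - #K)) -
      (#K * (G.tt K * (q + 1) * ((q : ℤ) ^ 2 + 1 - #K)) - G.S2 K) ≤ q * (q - 1) * #(G.qpl K) := by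
  rw [← G.main2 hK, ← card_offDiag']
  have h0 : (q : ℤ) * (q - 1) * #(G.qpl K) =
      ∑ x ∈ K.offDiag, ∑ π ∈ G.thr (G.ln x.1 x.2), if #(K ∩ π) = q then (1 : ℤ) else 0 := by
    have : ∀ x ∈ K.offDiag, (∑ π ∈ G.thr (G.ln x.1 x.2), if #(K ∩ π) = q then (1 : ℤ) else 0) =
        ∑ π ∈ G.qpl K, if x ∈ (K ∩ π).offDiag then (1 : ℤ) else 0 := by
      intro x hx
      rw [mem_offDiag] at hx
      rw [← Finset.sum_filter, ← Finset.sum_filter]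
      refine Finset.sum_congr ?_ (fun _ _ => rfl)
      ext π
      simp only [mem_filter, mem_thr, qpl, mem_offDiag, mem_inter]
      constructor
      · rintro ⟨⟨h1, h2⟩, h3⟩
        exact ⟨⟨h1, h3⟩, ⟨hx.1, h2 (G.left_mem _ _)⟩, ⟨hx.2.1, h2 (G.right_mem _ _)⟩, hx.2.2⟩
      · rintro ⟨⟨h1, h3⟩, h4, h5, h6⟩
        exact ⟨⟨h1, G.ln_sub π h1 _ h4.2 _ h5.2 h6⟩, h3⟩
    rw [Finset.sum_congr rfl this, Finset.sum_comm]
    have h2 : ∀ π ∈ G.qpl K, (∑ x ∈ K.offDiag, if x ∈ (K ∩ π).offDiag then (1 : ℤ) else 0) =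
        q * (q - 1) := by
      intro π hπ
      have hπ' : #(K ∩ π) = q := (mem_filter.mp hπ).2
      rw [← Finset.sum_filter, Finset.filter_mem_eq_inter, Finset.inter_eq_right.mpr
        (Finset.offDiag_mono inter_subset_left), Finset.sum_const, nsmul_eq_mul, mul_one,
        card_offDiag', hπ']
    rw [Finset.sum_congr rfl h2, Finset.sum_const, nsmul_eq_mul]; ring
  rw [h0]
  have : ∀ x ∈ K.offDiag, 3 * ((q : ℤ) ^ 2 + 1 - #K) ≤
      (∑ π ∈ G.thr (G.ln x.1 x.2), G.tp K π * (G.tp K π - 1)) +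
      ∑ π ∈ G.thr (G.ln x.1 x.2), if #(K ∩ π) = q then (1 : ℤ) else 0 := by
    intro x hx
    rw [mem_offDiag] at hx
    have h1 : ∑ π ∈ G.thr (G.ln x.1 x.2), (3 * G.tp K π - 3) = 3 * ((q : ℤ) ^ 2 + 1 - #K) := by
      rw [Finset.sum_sub_distrib, ← Finset.mul_sum, G.sum_tp_sec hK hx.1 hx.2.1 hx.2.2,
        Finset.sum_const, G.card_thr (G.ln_mem _ _ hx.2.2), nsmul_eq_mul]
      unfold tt; push_cast; ring
    rw [← h1, ← Finset.sum_add_distrib]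
    apply Finset.sum_le_sum
    intro π _
    split_ifs with h
    · have : G.tp K π = 2 := by unfold tp; rw [h]; ring
      rw [this]; norm_num
    · have : G.tp K π ≠ 2 := by
        unfold tp; intro h2; apply h; zify; linarith
      rcases lt_or_gt_of_ne this with h | h <;> nlinarith
  have h3 := Finset.card_nsmul_le_sum _ _ _ this
  rw [nsmul_eq_mul, Finset.sum_add_distrib] at h3
  linarith

/-- plane identity -/
lemma plane_id (hK : G.Cap K) {π : Finset α} (hπ : π ∈ G.Pl) :
    ∑ Q ∈ π \ K, (G.tp K π - G.aa K π Q) * (#(K ∩ π) - G.aa K π Q) =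
      #(K ∩ π) * (#(K ∩ π) - 1) * (G.tp K π * (G.tp K π - 1)) := by
  rw [G.double_count hK (G.flat_pl hπ) (fun Q => G.tp K π - G.aa K π Q), ← card_offDiag',
    ← nsmul_eq_mul, ← Finset.sum_const]
  refine Finset.sum_congr rfl (fun x hx => ?_)
  simp only [mem_offDiag, mem_inter] at hx
  exact G.sum_tp_sub_aa hK hπ hx.1.1 hx.2.1.1 hx.2.2 (G.ln_sub π hπ _ hx.1.2 _ hx.2.1.2 hx.2.2)

/-- either all points are tangent or there is a secant in W through Q -/
lemma exists_sec {W : Finset α} (hW : G.Flat W) {Q : α} (hQW : Q ∈ W) (hQ : Q ∉ K)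
    (h : G.aa K W Q ≠ #(K ∩ W)) :
    ∃ P ∈ K, ∃ R ∈ K, P ≠ R ∧ P ∈ W ∧ R ∈ W ∧ Q ∈ G.ln P R := by
  classical
  by_contra hc
  push Not at hc
  apply h
  unfold aa
  rw [Finset.filter_true_of_mem]
  intro P hP R hR hRP hQR
  rw [mem_inter] at hP
  exact hc P hP.1 R hR hRP.symm hP.2 (G.partner_mem hW hP.2 hQW (fun h => hQ (h ▸ hP.1)) hRP hQR) hQR

lemma P2 (H : G.Hyp K) {π : Finset α} (hπ : π ∈ G.Pl) (hk : #(K ∩ π) = q) :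
    #{Q ∈ π \ K | G.aa K π Q = q} = 2 := by
  have hq := H.qpos
  have h1 := G.plane_id H.cap hπ
  have h2 := G.sum_aa H.cap (G.flat_pl hπ)
  have htp : G.tp K π = 2 := by unfold tp; rw [hk]; ring
  have hcard : (#(π \ K) : ℤ) = q ^ 2 + 1 := by
    have h := Finset.card_sdiff_add_card_inter π K
    rw [Finset.inter_comm, hk, G.card_pl π hπ] at h
    zify at h; linarith
  rw [htp, hk] at h1
  rw [hk, G.card_pl π hπ] at h2
  have h3 : ∀ Q ∈ π \ K, (G.aa K π Q : ℤ) * (G.aa K π Q - 2) =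
      if G.aa K π Q = q then (q : ℤ) * (q - 2) else 0 := by
    intro Q hQ
    rw [mem_sdiff] at hQ
    split_ifs with h
    · rw [h]
    · obtain ⟨P, hP, R, hR, hPR, hPπ, hRπ, hQR⟩ :=
        G.exists_sec (G.flat_pl hπ) hQ.1 hQ.2 (by rw [hk]; exact h)
      have := H.p1 π hπ Q hQ.1 hQ.2 P hP R hR hPR hPπ hRπ hQR
      obtain ⟨m, hm⟩ := G.parity H.cap (G.flat_pl hπ) hQ.1 hQ.2
      obtain ⟨n, hn⟩ := H.qeven
      rw [hk] at this hm
      have : G.aa K π Q = 0 ∨ G.aa K π Q = 2 := by omega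
      rcases this with h | h <;> rw [h] <;> norm_num
  have h4 : ∑ Q ∈ π \ K, (G.aa K π Q : ℤ) * (G.aa K π Q - 2) =
      ∑ Q ∈ π \ K, (2 - (G.aa K π Q : ℤ)) * (q - G.aa K π Q) + q * ∑ Q ∈ π \ K, (G.aa K π Q : ℤ)
       - ∑ Q ∈ π \ K, 2 * (q : ℤ) := by
    rw [Finset.mul_sum, ← Finset.sum_add_distrib, ← Finset.sum_sub_distrib]
    exact Finset.sum_congr rfl (fun _ _ => by ring)
  rw [h1, h2, Finset.sum_const, nsmul_eq_mul, hcard, Finset.sum_congr rfl h3, ← Finset.sum_filter,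
    Finset.sum_const, nsmul_eq_mul] at h4
  push_cast at h4
  have h5 : (q : ℤ) * (q - 2) ≠ 0 := by
    apply mul_ne_zero
    · positivity
    · intro h; omega
  have h6 : ((#{Q ∈ π \ K | G.aa K π Q = q} : ℕ) : ℤ) = 2 := by
    apply mul_right_cancel₀ h5
    rw [h4]; ring
  exact_mod_cast h6

/-- planes with nucleus Q -/
noncomputable def nucp (G : Geo α q) (K : Finset α) (Q : α) : Finset (Finset α) :=
  {π ∈ G.qpl K | Q ∈ π ∧ G.aa K π Q = q}

lemma mem_nucp {Q : α} {π : Finset α} :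
    π ∈ G.nucp K Q ↔ π ∈ G.Pl ∧ #(K ∩ π) = q ∧ Q ∈ π ∧ G.aa K π Q = q := by
  unfold nucp qpl
  simp only [mem_filter]; tauto

lemma I3 (H : G.Hyp K) : 2 * #(G.qpl K) = ∑ Q ∈ univ \ K, #(G.nucp K Q) := by
  have : ∑ Q ∈ univ \ K, #(G.nucp K Q) = ∑ π ∈ G.qpl K, #{Q ∈ π \ K | G.aa K π Q = q} := by
    unfold nucp
    simp_rw [Finset.card_filter]
    rw [Finset.sum_comm]
    refine Finset.sum_congr rfl (fun π _ => ?_)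
    rw [← Finset.sum_filter, ← Finset.sum_filter]
    refine Finset.sum_congr ?_ (fun _ _ => rfl)
    ext Q; simp only [mem_filter, mem_sdiff, mem_univ, true_and]; tauto
  have h2 : ∀ π ∈ G.qpl K, #{Q ∈ π \ K | G.aa K π Q = q} = 2 :=
    fun π hπ => G.P2 H (mem_filter.mp hπ).1 (mem_filter.mp hπ).2
  rw [this, Finset.sum_congr rfl h2, Finset.sum_const, smul_eq_mul, mul_comm]

end Geo
end CapProof


namespace CapProof
open Finset
variable {α : Type*} [Fintype α] [DecidableEq α] {q : ℕ}
namespace Geo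
variable (G : Geo α q) {K : Finset α}

lemma nuc_tan {Q : α} {π : Finset α} (h : π ∈ G.nucp K Q) {P : α} (hP : P ∈ K) (hPπ : P ∈ π) :
    G.Tan K Q P := by
  classical
  rw [mem_nucp] at h
  have h1 : #{P ∈ K ∩ π | G.Tan K Q P} = #(K ∩ π) := by
    have e : G.aa K π Q = #(K ∩ π) := h.2.2.2.trans h.2.1.symm
    rw [← e]; unfold aa; congr 2
  exact (Finset.card_filter_eq_iff.mp h1) P (mem_inter.mpr ⟨hP, hPπ⟩)

lemma tan_line {Q : α} {l : Finset α} (hl : l ∈ G.Ln) (hQ : Q ∈ l) {P R : α} (hR : R ∈ K)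
    (hPl : P ∈ l) (hRl : R ∈ l) (hT : G.Tan K Q P) : R = P := by
  by_contra h
  apply hT R hR h
  rw [← G.ln_unique l hl P hPl R hRl (Ne.symm h)]; exact hQ

lemma nuc_inter {Q : α} {π π' : Finset α} (h : π ∈ G.nucp K Q) (hπ' : π' ∈ G.Pl) (hQ : Q ∈ π')
    (hne : π' ≠ π) : #(K ∩ (π' ∩ π)) ≤ 1 := by
  rw [Finset.card_le_one]
  intro P hP R hR
  rw [mem_inter] at hP hR
  have hm := (G.mem_nucp.mp h)
  exact (G.tan_line (G.pl_meet π' hπ' π hm.1 hne) (mem_inter.mpr ⟨hQ, hm.2.2.1⟩) hR.1 hP.2 hR.2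
    (G.nuc_tan h hP.1 (mem_inter.mp hP.2).2)).symm

lemma plane_eq {l : Finset α} (hl : l ∈ G.Ln) {P : α} (hP : P ∉ l) {π π' : Finset α} (h1 : π ∈ G.Pl)
    (h2 : π' ∈ G.Pl) (h3 : l ⊆ π) (h4 : l ⊆ π') (h5 : P ∈ π) (h6 : P ∈ π') : π = π' := by
  have := G.pl_unique l hl P hP
  exact Finset.card_le_one.mp this.le π (by simp [h1, h3, h5]) π' (by simp [h2, h4, h6])

lemma ln_eq_of_sub {l m : Finset α} (hl : l ∈ G.Ln) (hm : m ∈ G.Ln) (h : l ⊆ m) : l = m :=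
  Finset.eq_of_subset_of_card_le h (by rw [G.card_ln l hl, G.card_ln m hm])

lemma aa_eq (W : Finset α) (Q : α) [DecidablePred fun P => G.Tan K Q P] :
    G.aa K W Q = #({P ∈ K | G.Tan K Q P} ∩ W) := by
  unfold aa
  congr 1
  ext P
  simp only [mem_filter, mem_inter]
  tauto

lemma sigma_two {Q : α} {π₁ π₂ : Finset α} (h1 : π₁ ∈ G.nucp K Q) (h2 : π₂ ∈ G.nucp K Q)
    [DecidablePred fun P => G.Tan K Q P] :
    G.aa K univ Q + #(K ∩ (π₁ ∩ π₂)) = 2 * q + #{P ∈ K | G.Tan K Q P ∧ P ∉ π₁ ∧ P ∉ π₂} := by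
  have hm1 := G.mem_nucp.mp h1
  have hm2 := G.mem_nucp.mp h2
  have hs : ∀ W : Finset α, (∀ P ∈ K, P ∈ W → G.Tan K Q P) → {P ∈ K | G.Tan K Q P} ∩ W = K ∩ W := by
    intro W hW
    ext P; simp only [mem_inter, mem_filter]
    constructor
    · tauto
    · rintro ⟨h1, h2⟩; exact ⟨⟨h1, hW P h1 h2⟩, h2⟩
  have e1 := hs π₁ (fun P hP hPπ => G.nuc_tan h1 hP hPπ)
  have e2 := hs π₂ (fun P hP hPπ => G.nuc_tan h2 hP hPπ)
  rw [G.aa_eq, Finset.inter_univ]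
  set S := {P ∈ K | G.Tan K Q P} with hS
  have h3 := Finset.card_inter_add_card_sdiff S (π₁ ∪ π₂)
  have h4 : S \ (π₁ ∪ π₂) = {P ∈ K | G.Tan K Q P ∧ P ∉ π₁ ∧ P ∉ π₂} := by
    ext P; simp only [hS, mem_sdiff, mem_filter, mem_union, not_or]; tauto
  have h5 : S ∩ (π₁ ∪ π₂) = (K ∩ π₁) ∪ (K ∩ π₂) := by
    rw [Finset.inter_union_distrib_left, e1, e2]
  have h6 := Finset.card_union_add_card_inter (K ∩ π₁) (K ∩ π₂)
  have h7 : (K ∩ π₁) ∩ (K ∩ π₂) = K ∩ (π₁ ∩ π₂) := by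
    ext P; simp only [mem_inter]; tauto
  rw [h7, hm1.2.1, hm2.2.1] at h6
  rw [h5, h4] at h3
  omega

lemma nuc_le_two (H : G.Hyp K) {Q : α} (hQ : Q ∉ K) (ht : G.tt K < 3 * q - 3) :
    #(G.nucp K Q) ≤ 2 := by
  classical
  by_contra hc
  push Not at hc
  obtain ⟨π₁, h1, π₂, h2, π₃, h3, h12, h13, h23⟩ := Finset.two_lt_card.mp hc
  have hs := G.sigma_two h1 h2
  have hm1 := G.mem_nucp.mp h1
  have hm2 := G.mem_nucp.mp h2
  have hm3 := G.mem_nucp.mp h3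
  have i12 := G.nuc_inter h2 hm1.1 hm1.2.2.1 h12
  have i31 := G.nuc_inter h1 hm3.1 hm3.2.2.1 h13.symm
  have i32 := G.nuc_inter h2 hm3.1 hm3.2.2.1 h23.symm
  have hsub : K ∩ π₃ ⊆ {P ∈ K | G.Tan K Q P ∧ P ∉ π₁ ∧ P ∉ π₂} ∪ (K ∩ (π₃ ∩ π₁) ∪ K ∩ (π₃ ∩ π₂)) := by
    intro P hP
    have := G.nuc_tan h3 (mem_inter.mp hP).1 (mem_inter.mp hP).2
    simp only [mem_union, mem_filter, mem_inter] at hP ⊢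
    tauto
  have c1 := Finset.card_le_card hsub
  have c2 := Finset.card_union_le {P ∈ K | G.Tan K Q P ∧ P ∉ π₁ ∧ P ∉ π₂} (K ∩ (π₃ ∩ π₁) ∪ K ∩ (π₃ ∩ π₂))
  have c3 := Finset.card_union_le (K ∩ (π₃ ∩ π₁)) (K ∩ (π₃ ∩ π₂))
  have hd := G.dl_nonneg H hQ
  unfold dl at hd
  rw [hm3.2.1] at c1
  have : 3 * q ≤ G.aa K univ Q + 3 := by omega
  zify at this
  linarith

lemma dl_even (H : G.Hyp K) {Q : α} (hQ : Q ∉ K) : ∃ m, G.dl K Q = 2 * m := by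
  obtain ⟨m, hm⟩ := G.parity H.cap G.flat_univ (mem_univ Q) hQ
  rw [Finset.inter_univ] at hm
  obtain ⟨n, hn⟩ := H.qeven
  refine ⟨2 * n ^ 2 + n + 1 - G.aa K univ Q - m, ?_⟩
  unfold dl tt
  have hn' : (q : ℤ) = n + n := by exact_mod_cast hn
  rw [← hm]; push_cast
  linear_combination ((q : ℤ) + 2 * n + 1) * hn'

/-- `f_π` -/
noncomputable def ff (G : Geo α q) (K : Finset α) (Q : α) (π : Finset α) : ℤ :=
  G.tp K π - G.aa K π Q

lemma sum_ff {l : Finset α} (hl : l ∈ G.Ln) (Q : α) :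
    ∑ π ∈ G.thr l, G.ff K Q π = G.dl K Q + 2 * q - q * (#(K ∩ l) + G.aa K l Q) := by
  unfold ff
  rw [Finset.sum_sub_distrib, G.sum_tp_thr hl, G.sum_aa_thr hl]
  unfold dl; ring

/-- context of the structure lemma -/
structure Str (G : Geo α q) (K : Finset α) (Q : α) (π₁ π₂ : Finset α) : Prop where
  H : G.Hyp K
  hQ : Q ∉ K
  h1 : π₁ ∈ G.nucp K Q
  h2 : π₂ ∈ G.nucp K Q
  ne : π₁ ≠ π₂
  ht : 4 * G.tt K ≤ 9 * q - 16
  hq : 16 ≤ q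
  hd : G.dl K Q ≤ 2

open Classical in
/-- tangent points outside the two planes -/
noncomputable def AA (G : Geo α q) (K : Finset α) (Q : α) (π₁ π₂ : Finset α) : Finset α :=
  {P ∈ K | G.Tan K Q P ∧ P ∉ π₁ ∧ P ∉ π₂}

namespace Str
variable {G} {Q : α} {π₁ π₂ : Finset α}

lemma m1 (h : Str G K Q π₁ π₂) : π₁ ∈ G.Pl ∧ #(K ∩ π₁) = q ∧ Q ∈ π₁ ∧ G.aa K π₁ Q = q := G.mem_nucp.mp h.h1
lemma m2 (h : Str G K Q π₁ π₂) : π₂ ∈ G.Pl ∧ #(K ∩ π₂) = q ∧ Q ∈ π₂ ∧ G.aa K π₂ Q = q := G.mem_nucp.mp h.h2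

lemma eLn (h : Str G K Q π₁ π₂) : π₁ ∩ π₂ ∈ G.Ln := G.pl_meet _ h.m1.1 _ h.m2.1 h.ne
lemma Qe (h : Str G K Q π₁ π₂) : Q ∈ π₁ ∩ π₂ := mem_inter.mpr ⟨h.m1.2.2.1, h.m2.2.2.1⟩
lemma eps (h : Str G K Q π₁ π₂) : #(K ∩ (π₁ ∩ π₂)) ≤ 1 := G.nuc_inter h.h2 h.m1.1 h.m1.2.2.1 h.ne
lemma sig (h : Str G K Q π₁ π₂) : G.aa K univ Q + #(K ∩ (π₁ ∩ π₂)) = 2 * q + #(G.AA K Q π₁ π₂) := by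
  classical
  rw [G.sigma_two h.h1 h.h2]; unfold AA; congr 2

lemma rle (h : Str G K Q π₁ π₂) : 4 * #(G.AA K Q π₁ π₂) + 12 ≤ q := by
  have h1 := h.sig
  have h2 := h.eps
  have h3 := G.dl_nonneg h.H h.hQ
  have h4 := h.ht
  unfold dl at h3
  zify at h1 h2 ⊢
  linarith

lemma abound (h : Str G K Q π₁ π₂) {π : Finset α} (hπ : π ∈ G.Pl) (hQπ : Q ∈ π) (n1 : π ≠ π₁) (n2 : π ≠ π₂) :
    G.aa K π Q ≤ 2 + #(G.AA K Q π₁ π₂ ∩ π) := by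
  classical
  have i1 := G.nuc_inter h.h1 hπ hQπ n1
  have i2 := G.nuc_inter h.h2 hπ hQπ n2
  have hsub : {P ∈ K ∩ π | G.Tan K Q P} ⊆ (K ∩ (π ∩ π₁) ∪ K ∩ (π ∩ π₂)) ∪ (G.AA K Q π₁ π₂ ∩ π) := by
    intro P hP
    simp only [AA, mem_union, mem_filter, mem_inter] at hP ⊢
    tauto
  have c1 := Finset.card_le_card hsub
  have c2 := Finset.card_union_le (K ∩ (π ∩ π₁) ∪ K ∩ (π ∩ π₂)) (G.AA K Q π₁ π₂ ∩ π)
  have c3 := Finset.card_union_le (K ∩ (π ∩ π₁)) (K ∩ (π ∩ π₂))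
  have : G.aa K π Q ≤ #{P ∈ K ∩ π | G.Tan K Q P} := by unfold aa; exact le_of_eq (by congr 2)
  omega

/-- a plane on e other than π₁, π₂ meets them in e -/
lemma e_inter (h : Str G K Q π₁ π₂) {π : Finset α} (hπ : π ∈ G.Pl) (he : π₁ ∩ π₂ ⊆ π) (n1 : π ≠ π₁) (n2 : π ≠ π₂) {P : α}
    (hP : P ∈ π) (hP' : P ∈ π₁ ∨ P ∈ π₂) : P ∈ π₁ ∩ π₂ := by
  by_contra hc
  rcases hP' with h' | h'
  · exact n1 (G.plane_eq h.eLn hc hπ h.m1.1 he inter_subset_left hP h')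
  · exact n2 (G.plane_eq h.eLn hc hπ h.m2.1 he inter_subset_right hP h')

lemma abound_e (h : Str G K Q π₁ π₂) {π : Finset α} (hπ : π ∈ G.Pl) (he : π₁ ∩ π₂ ⊆ π) (n1 : π ≠ π₁) (n2 : π ≠ π₂) :
    G.aa K π Q ≤ #(K ∩ (π₁ ∩ π₂)) + #(G.AA K Q π₁ π₂ ∩ π) := by
  classical
  have hsub : {P ∈ K ∩ π | G.Tan K Q P} ⊆ (K ∩ (π₁ ∩ π₂)) ∪ (G.AA K Q π₁ π₂ ∩ π) := by
    intro P hP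
    have := h.e_inter (P := P) hπ he n1 n2
    simp only [AA, mem_union, mem_filter, mem_inter] at hP this ⊢
    tauto
  have c1 := Finset.card_le_card hsub
  have c2 := Finset.card_union_le (K ∩ (π₁ ∩ π₂)) (G.AA K Q π₁ π₂ ∩ π)
  have : G.aa K π Q ≤ #{P ∈ K ∩ π | G.Tan K Q P} := by unfold aa; exact le_of_eq (by congr 2)
  omega

lemma f_M (h : Str G K Q π₁ π₂) {π : Finset α} (hM : G.aa K π Q = #(K ∩ π)) : G.ff K Q π = q + 2 - 2 * G.aa K π Q := by
  unfold ff tp; rw [← hM]; ring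

lemma f_big (h : Str G K Q π₁ π₂) {π : Finset α} (hπ : π ∈ G.Pl) (hQπ : Q ∈ π) (n1 : π ≠ π₁) (n2 : π ≠ π₂)
    (hM : G.aa K π Q = #(K ∩ π)) : 2 < G.ff K Q π := by
  rw [h.f_M hM]
  have h1 := h.abound hπ hQπ n1 n2
  have h2 := h.rle
  have h3 := Finset.card_le_card (Finset.inter_subset_left (s₁ := G.AA K Q π₁ π₂) (s₂ := π))
  have h4 := h.hq
  omega

lemma f_nonM (h : Str G K Q π₁ π₂) {π : Finset α} (hπ : π ∈ G.Pl) (hQπ : Q ∈ π) (hM : G.aa K π Q ≠ #(K ∩ π)) :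
    0 ≤ G.ff K Q π := by
  obtain ⟨P, hP, R, hR, hPR, hPπ, hRπ, hQR⟩ := G.exists_sec (G.flat_pl hπ) hQπ h.hQ hM
  have := h.H.p1 π hπ Q hQπ h.hQ P hP R hR hPR hPπ hRπ hQR
  unfold ff tp
  omega

lemma f_nonneg (h : Str G K Q π₁ π₂) {π : Finset α} (hπ : π ∈ G.Pl) (hQπ : Q ∈ π) (n1 : π ≠ π₁) (n2 : π ≠ π₂) :
    0 ≤ G.ff K Q π := by
  by_cases hM : G.aa K π Q = #(K ∩ π)
  · have := h.f_big hπ hQπ n1 n2 hM; omega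
  · exact h.f_nonM hπ hQπ hM

lemma f_even (h : Str G K Q π₁ π₂) {π : Finset α} (hπ : π ∈ G.Pl) (hQπ : Q ∈ π) : ∃ m, G.ff K Q π = 2 * m := by
  obtain ⟨m, hm⟩ := G.parity h.H.cap (G.flat_pl hπ) hQπ h.hQ
  obtain ⟨n, hn⟩ := h.H.qeven
  refine ⟨n + 1 - G.aa K π Q - m, ?_⟩
  unfold ff tp
  omega

lemma f1 (h : Str G K Q π₁ π₂) : G.ff K Q π₁ = 2 - q := by
  unfold ff tp; rw [h.m1.2.1, h.m1.2.2.2]; ring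
lemma f2 (h : Str G K Q π₁ π₂) : G.ff K Q π₂ = 2 - q := by
  unfold ff tp; rw [h.m2.2.1, h.m2.2.2.2]; ring

lemma aa_tan_ln {P : α} (hP : P ∈ K) (hQ : Q ∉ K) (hT : G.Tan K Q P) :
    #(K ∩ G.ln Q P) = 1 ∧ G.aa K (G.ln Q P) Q = 1 := by
  classical
  have hQP : Q ≠ P := fun h => hQ (h ▸ hP)
  have hi : K ∩ G.ln Q P = {P} := by
    ext R
    simp only [mem_inter, mem_singleton]
    constructor
    · rintro ⟨h1, h2⟩
      exact G.tan_line (G.ln_mem Q P hQP) (G.left_mem _ _) h1 (G.right_mem _ _) h2 hT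
    · rintro rfl; exact ⟨hP, G.right_mem _ _⟩
  refine ⟨by rw [hi]; simp, ?_⟩
  unfold aa
  rw [hi, Finset.filter_true_of_mem]
  · simp
  · intro R hR; rw [mem_singleton.mp hR]; exact hT

lemma sum_tan (h : Str G K Q π₁ π₂) {P : α} (hP : P ∈ K) (hT : G.Tan K Q P) :
    ∑ π ∈ G.thr (G.ln Q P), G.ff K Q π = G.dl K Q := by
  have hQP : Q ≠ P := fun h' => h.hQ (h' ▸ hP)
  rw [G.sum_ff (G.ln_mem Q P hQP), (aa_tan_ln hP h.hQ hT).1, (aa_tan_ln hP h.hQ hT).2]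
  push_cast; ring

lemma sum_nontan (h : Str G K Q π₁ π₂) {P : α} (hP : P ∈ K) (hT : ¬ G.Tan K Q P) :
    ∑ π ∈ G.thr (G.ln Q P), G.ff K Q π = G.dl K Q := by
  have hQP : Q ≠ P := fun h' => h.hQ (h' ▸ hP)
  unfold Tan at hT
  push Not at hT
  obtain ⟨R, hR, hRP, hQR⟩ := hT
  rw [G.ln_comm Q P hQP, G.ln_eq hRP.symm hQR hQP, G.dl_sec h.H.cap hP hR hRP.symm hQR]
  rfl

lemma f_le_of_mem (h : Str G K Q π₁ π₂) {P : α} (hP : P ∈ K) (hP1 : P ∉ π₁) (hP2 : P ∉ π₂) {π : Finset α} (hπ : π ∈ G.Pl)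
    (hQπ : Q ∈ π) (hPπ : P ∈ π) : G.ff K Q π ≤ G.dl K Q := by
  have hQP : Q ≠ P := fun h' => h.hQ (h' ▸ hP)
  have hs : ∑ π ∈ G.thr (G.ln Q P), G.ff K Q π = G.dl K Q := by
    by_cases hT : G.Tan K Q P
    · exact h.sum_tan hP hT
    · exact h.sum_nontan hP hT
  rw [← hs]
  refine Finset.single_le_sum (f := fun π => G.ff K Q π) ?_ (G.mem_thr.mpr ⟨hπ, G.ln_sub π hπ Q hQπ P hPπ hQP⟩)
  intro π' hπ'
  rw [mem_thr] at hπ'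
  exact h.f_nonneg hπ'.1 (hπ'.2 (G.left_mem _ _)) (fun e => hP1 (e ▸ hπ'.2 (G.right_mem _ _)))
    (fun e => hP2 (e ▸ hπ'.2 (G.right_mem _ _)))

lemma noM (h : Str G K Q π₁ π₂) {P : α} (hP : P ∈ K) (hP1 : P ∉ π₁) (hP2 : P ∉ π₂) {π : Finset α} (hπ : π ∈ G.Pl)
    (hQπ : Q ∈ π) (hPπ : P ∈ π) : G.aa K π Q ≠ #(K ∩ π) := by
  intro hM
  have h1 := h.f_le_of_mem hP hP1 hP2 hπ hQπ hPπ
  have h2 := h.f_big hπ hQπ (fun e => hP1 (e ▸ hPπ)) (fun e => hP2 (e ▸ hPπ)) hM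
  have := h.hd
  omega

lemma M_AA (h : Str G K Q π₁ π₂) {π : Finset α} (hπ : π ∈ G.Pl) (hQπ : Q ∈ π) (hM : G.aa K π Q = #(K ∩ π)) :
    #(G.AA K Q π₁ π₂ ∩ π) = 0 := by
  rw [Finset.card_eq_zero, Finset.eq_empty_iff_forall_notMem]
  intro P hP
  simp only [AA, mem_inter, mem_filter] at hP
  exact h.noM hP.1.1 hP.1.2.2.1 hP.1.2.2.2 hπ hQπ hP.2 hM

lemma sec_out (h : Str G K Q π₁ π₂) {P : α} (hP : P ∈ K) (hT : ¬ G.Tan K Q P) : P ∉ π₁ ∧ P ∉ π₂ :=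
  ⟨fun h' => hT (G.nuc_tan h.h1 hP h'), fun h' => hT (G.nuc_tan h.h2 hP h')⟩

lemma nonM_le (h : Str G K Q π₁ π₂) {π : Finset α} (hπ : π ∈ G.Pl) (hQπ : Q ∈ π) (hM : G.aa K π Q ≠ #(K ∩ π)) :
    G.ff K Q π ≤ G.dl K Q := by
  obtain ⟨P, hP, R, hR, hPR, hPπ, hRπ, hQR⟩ := G.exists_sec (G.flat_pl hπ) hQπ h.hQ hM
  have hT := (G.sec_not_tan hP hR hPR hQR).1
  exact h.f_le_of_mem hP (h.sec_out hP hT).1 (h.sec_out hP hT).2 hπ hQπ hPπ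

lemma nonM_02 (h : Str G K Q π₁ π₂) {π : Finset α} (hπ : π ∈ G.Pl) (hQπ : Q ∈ π) (hM : G.aa K π Q ≠ #(K ∩ π)) :
    G.ff K Q π = 0 ∨ G.ff K Q π = 2 := by
  have h1 := h.nonM_le hπ hQπ hM
  have h2 := h.f_nonM hπ hQπ hM
  obtain ⟨m, hm⟩ := h.f_even hπ hQπ
  have := h.hd
  omega

end Str

/-- the family 𝒟 -/
noncomputable def DD (G : Geo α q) (K : Finset α) (Q : α) : Finset (Finset α) :=
  {π ∈ G.Pl | Q ∈ π ∧ G.aa K π Q ≠ #(K ∩ π) ∧ G.ff K Q π = 2}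

lemma mem_DD {Q : α} {π : Finset α} : π ∈ G.DD K Q ↔
    π ∈ G.Pl ∧ Q ∈ π ∧ G.aa K π Q ≠ #(K ∩ π) ∧ G.ff K Q π = 2 := by
  unfold DD; rw [mem_filter]

namespace Str
variable {G} {Q : α} {π₁ π₂ : Finset α}

/-- planes on e -/
lemma De_bound (h : Str G K Q π₁ π₂) : (q : ℤ) - 10 + G.dl K Q ≤ 2 * #{π ∈ G.DD K Q | π₁ ∩ π₂ ⊆ π} := by
  classical
  set e := π₁ ∩ π₂ with he
  have hKe : G.aa K e Q = #(K ∩ e) := by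
    unfold aa
    rw [Finset.filter_true_of_mem]
    intro P hP
    rw [he, mem_inter, mem_inter] at hP
    exact G.nuc_tan h.h1 hP.1 hP.2.1
  have hsum := G.sum_ff (K := K) h.eLn Q
  rw [← he, hKe] at hsum
  have t1 : π₁ ∈ G.thr e := G.mem_thr.mpr ⟨h.m1.1, inter_subset_left⟩
  have t2 : π₂ ∈ (G.thr e).erase π₁ :=
    mem_erase.mpr ⟨h.ne.symm, G.mem_thr.mpr ⟨h.m2.1, inter_subset_right⟩⟩
  rw [← Finset.add_sum_erase _ _ t1, ← Finset.add_sum_erase _ _ t2, h.f1, h.f2] at hsum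
  set s := ((G.thr e).erase π₁).erase π₂ with hs
  have hf : ∀ π ∈ s, G.ff K Q π = (if G.aa K π Q = #(K ∩ π) then (q + 2 - 2 * #(K ∩ e) : ℤ) else 0)
      + (if π ∈ G.DD K Q then 2 else 0) := by
    intro π hπ
    simp only [hs, mem_erase, mem_thr] at hπ
    obtain ⟨n2, n1, hπP, heπ⟩ := hπ
    have hQπ : Q ∈ π := heπ h.Qe
    by_cases hM : G.aa K π Q = #(K ∩ π)
    · rw [if_pos hM, if_neg (by rw [mem_DD]; tauto), h.f_M hM]
      have h1 := h.abound_e hπP heπ n1 n2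
      rw [h.M_AA hπP hQπ hM, ← he] at h1
      have h2 : #(K ∩ e) ≤ #(K ∩ π) := Finset.card_le_card (Finset.inter_subset_inter_left heπ)
      have : G.aa K π Q = #(K ∩ e) := by omega
      rw [this]; ring
    · rw [if_neg hM]
      rcases h.nonM_02 hπP hQπ hM with h0 | h0
      · rw [if_neg (by rw [mem_DD, h0]; simp), h0]; rfl
      · rw [if_pos (by rw [mem_DD]; exact ⟨hπP, hQπ, hM, h0⟩), h0]; rfl
  rw [Finset.sum_congr rfl hf, Finset.sum_add_distrib, ← Finset.sum_filter, ← Finset.sum_filter,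
    Finset.sum_const, Finset.sum_const, nsmul_eq_mul, nsmul_eq_mul] at hsum
  have hle : #{π ∈ s | π ∈ G.DD K Q} ≤ #{π ∈ G.DD K Q | e ⊆ π} := by
    apply Finset.card_le_card
    intro π hπ
    simp only [hs, mem_filter, mem_erase, mem_thr] at hπ ⊢
    exact ⟨hπ.2, hπ.1.2.2.2⟩
  have heps := h.eps
  rw [← he] at heps
  generalize #{π ∈ s | G.aa K π Q = #(K ∩ π)} = j at hsum
  generalize #{π ∈ s | π ∈ G.DD K Q} = x at hsum hle
  generalize #{π ∈ G.DD K Q | e ⊆ π} = y at hle ⊢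
  have hd := h.hd
  have hq := h.hq
  have hd0 := G.dl_nonneg h.H h.hQ
  zify at hle hq
  rcases Nat.le_one_iff_eq_zero_or_eq_one.mp heps with h0 | h0
  · rw [h0] at hsum
    push_cast at hsum
    have : (j : ℤ) ≤ 3 := by
      by_contra hc; push Not at hc
      nlinarith
    nlinarith
  · rw [h0] at hsum
    push_cast at hsum
    have : (j : ℤ) ≤ 1 := by
      by_contra hc; push Not at hc
      nlinarith
    nlinarith

lemma dl_eq_two (h : Str G K Q π₁ π₂) : G.dl K Q = 2 := by
  obtain ⟨m, hm⟩ := G.dl_even h.H h.hQ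
  have h1 := h.hd
  have h2 := G.dl_nonneg h.H h.hQ
  by_contra hc
  have h0 : G.dl K Q = 0 := by omega
  have h3 := h.De_bound
  have h4 : G.DD K Q = ∅ := by
    rw [Finset.eq_empty_iff_forall_notMem]
    intro π hπ
    rw [mem_DD] at hπ
    have := h.nonM_le hπ.1 hπ.2.1 hπ.2.2.1
    omega
  rw [h4, h0] at h3
  have := h.hq
  simp at h3
  omega

/-- points outside the two planes lie on exactly one plane of 𝒟 -/
lemma D_one (h : Str G K Q π₁ π₂) {P : α} (hP : P ∈ K) (hP1 : P ∉ π₁) (hP2 : P ∉ π₂) : #{π ∈ G.DD K Q | P ∈ π} = 1 := by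
  have hQP : Q ≠ P := fun h' => h.hQ (h' ▸ hP)
  have hs : ∑ π ∈ G.thr (G.ln Q P), G.ff K Q π = G.dl K Q := by
    by_cases hT : G.Tan K Q P
    · exact h.sum_tan hP hT
    · exact h.sum_nontan hP hT
  have hf : ∀ π ∈ G.thr (G.ln Q P), G.ff K Q π = if π ∈ G.DD K Q then 2 else 0 := by
    intro π hπ
    rw [mem_thr] at hπ
    have hQπ := hπ.2 (G.left_mem _ _)
    have hPπ := hπ.2 (G.right_mem _ _)
    have hM := h.noM hP hP1 hP2 hπ.1 hQπ hPπ
    rcases h.nonM_02 hπ.1 hQπ hM with h0 | h0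
    · rw [if_neg (by rw [mem_DD, h0]; simp), h0]
    · rw [if_pos (by rw [mem_DD]; exact ⟨hπ.1, hQπ, hM, h0⟩), h0]
  rw [Finset.sum_congr rfl hf, ← Finset.sum_filter, Finset.sum_const, nsmul_eq_mul,
    h.dl_eq_two] at hs
  have he : {π ∈ G.DD K Q | P ∈ π} = {π ∈ G.thr (G.ln Q P) | π ∈ G.DD K Q} := by
    ext π
    simp only [mem_filter, mem_thr]
    constructor
    · rintro ⟨h1, h2⟩
      have h3 := G.mem_DD.mp h1
      exact ⟨⟨h3.1, G.ln_sub π h3.1 Q h3.2.1 P h2 hQP⟩, h1⟩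
    · rintro ⟨⟨_, h1⟩, h2⟩
      exact ⟨h2, h1 (G.right_mem _ _)⟩
  rw [he]
  omega

lemma D_count (h : Str G K Q π₁ π₂) (S : Finset α) (hS : ∀ P ∈ S, P ∈ K ∧ P ∉ π₁ ∧ P ∉ π₂) :
    ∑ π ∈ G.DD K Q, #(S ∩ π) = #S := by
  have h1 : ∀ π : Finset α, #(S ∩ π) = ∑ x ∈ S, if x ∈ π then 1 else 0 := by
    intro π
    rw [← Finset.filter_mem_eq_inter, Finset.card_filter]
  simp_rw [h1]
  rw [Finset.sum_comm, Finset.card_eq_sum_ones]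
  refine Finset.sum_congr rfl (fun P hP => ?_)
  rw [← Finset.card_filter]
  exact h.D_one (hS P hP).1 (hS P hP).2.1 (hS P hP).2.2

/-- uniqueness of the external line on a nucleus -/
lemma ext_unique (h : Str G K Q π₁ π₂) {l l' : Finset α} (hl : l ∈ G.Ln) (hl' : l' ∈ G.Ln) (hs : l ⊆ π₂) (hs' : l' ⊆ π₂)
    (hQl : Q ∈ l) (hQl' : Q ∈ l') (hK : K ∩ l = ∅) (hK' : K ∩ l' = ∅) : l = l' := by
  classical
  by_contra hne
  have hq := h.hq
  have hex : ∀ m ∈ G.Ln, ∃ X ∈ m, X ≠ Q := by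
    intro m hm
    exact Finset.exists_mem_ne (by rw [G.card_ln m hm]; omega) Q
  obtain ⟨X, hX, hXQ⟩ := hex l hl
  obtain ⟨Y, hY, hYQ⟩ := hex l' hl'
  have hXY : X ≠ Y := by
    rintro rfl
    exact hne (G.ln_inter hl hl' hXQ hX hQl hY hQl')
  have hmL := G.ln_mem X Y hXY
  have hm2 : G.ln X Y ⊆ π₂ := G.ln_sub _ h.m2.1 X (hs hX) Y (hs' hY) hXY
  have hQm : Q ∉ G.ln X Y := by
    intro hc
    have e1 := G.ln_inter hl hmL hXQ hX hQl (G.left_mem _ _) hc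
    have e2 := G.ln_inter hl' hmL hYQ hY hQl' (G.right_mem _ _) hc
    exact hne (e1.trans e2.symm)
  have hpr : ∀ P ∈ K ∩ π₂, ∃ Z ∈ G.ln X Y, Z ∈ G.ln Q P := by
    intro P hP
    rw [mem_inter] at hP
    have hQP : Q ≠ P := fun h' => h.hQ (h' ▸ hP.1)
    exact G.meet _ h.m2.1 _ hmL _ (G.ln_mem Q P hQP) hm2 (G.ln_sub _ h.m2.1 Q h.m2.2.2.1 P hP.2 hQP)
  choose! z hz1 hz2 using hpr
  have hmaps : Set.MapsTo z (K ∩ π₂ : Finset α) (((G.ln X Y).erase X).erase Y : Finset α) := by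
    intro P hP
    rw [mem_coe] at hP ⊢
    have e1 := hz1 P hP
    have e2 := hz2 P hP
    rw [mem_inter] at hP
    have hQP : Q ≠ P := fun h' => h.hQ (h' ▸ hP.1)
    have key : ∀ (m : Finset α), m ∈ G.Ln → Q ∈ m → K ∩ m = ∅ → z P ∉ m := by
      intro m hm hQm' hKm hzm
      have hzQ : z P ≠ Q := fun h' => hQm (h' ▸ e1)
      have := G.ln_inter hm (G.ln_mem Q P hQP) hzQ hzm hQm' e2 (G.left_mem _ _)
      have : P ∈ K ∩ m := mem_inter.mpr ⟨hP.1, this ▸ G.right_mem _ _⟩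
      rw [hKm] at this
      exact Finset.notMem_empty _ this
    simp only [mem_erase]
    exact ⟨fun h' => key l' hl' hQl' hK' (h' ▸ hY), fun h' => key l hl hQl hK (h' ▸ hX), e1⟩
  have hinj : Set.InjOn z (K ∩ π₂ : Finset α) := by
    intro P hP R hR hPR
    rw [mem_coe] at hP hR
    have e1 := hz1 P hP
    have e2 := hz2 P hP
    have e3 := hz2 R hR
    rw [← hPR] at e3
    rw [mem_inter] at hP hR
    have hQP : Q ≠ P := fun h' => h.hQ (h' ▸ hP.1)
    have hQR : Q ≠ R := fun h' => h.hQ (h' ▸ hR.1)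
    have hzQ : z P ≠ Q := fun h' => hQm (h' ▸ e1)
    have := G.ln_inter (G.ln_mem Q P hQP) (G.ln_mem Q R hQR) hzQ e2 (G.left_mem _ _) e3 (G.left_mem _ _)
    exact (G.tan_line (G.ln_mem Q P hQP) (G.left_mem _ _) hR.1 (G.right_mem _ _)
      (this ▸ G.right_mem _ _) (G.nuc_tan h.h2 hP.1 hP.2)).symm
  have hc := Finset.card_le_card_of_injOn z hmaps hinj
  rw [h.m2.2.1, Finset.card_erase_of_mem (mem_erase.mpr ⟨hXY.symm, G.right_mem _ _⟩),
    Finset.card_erase_of_mem (G.left_mem _ _), G.card_ln _ hmL] at hc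
  omega

end Str

/-- bad planes -/
noncomputable def Bd (G : Geo α q) (K : Finset α) (Q : α) (π₁ π₂ : Finset α) : Finset (Finset α) :=
  {π ∈ G.Pl | Q ∈ π ∧ G.aa K π Q = #(K ∩ π) ∧ #(K ∩ π) = 1 ∧ ∃ P ∈ K, P ∈ π₁ ∧ P ∉ π₂ ∧ P ∈ π}

namespace Str
variable {G} {Q : α} {π₁ π₂ : Finset α}

lemma Bd_props (h : Str G K Q π₁ π₂) {π : Finset α} (hb : π ∈ G.Bd K Q π₁ π₂) :
    π ∈ G.Pl ∧ Q ∈ π ∧ π ≠ π₁ ∧ π ≠ π₂ ∧ G.ff K Q π = q ∧ K ∩ (π ∩ π₂) = ∅ ∧ ¬ π₁ ∩ π₂ ⊆ π := by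
  have hq := h.hq
  unfold Bd at hb
  rw [mem_filter] at hb
  obtain ⟨hπ, hQπ, hM, h1, P, hP, hP1, hP2, hPπ⟩ := hb
  have n1 : π ≠ π₁ := by
    rintro rfl
    have := h.m1.2.1; omega
  have n2 : π ≠ π₂ := by
    rintro rfl
    have := h.m2.2.1; omega
  refine ⟨hπ, hQπ, n1, n2, ?_, ?_, ?_⟩
  · rw [h.f_M hM, hM, h1]; push_cast; ring
  · obtain ⟨x, hx⟩ := Finset.card_eq_one.mp h1
    rw [Finset.eq_empty_iff_forall_notMem]
    intro R hR
    simp only [mem_inter] at hR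
    have e1 : P ∈ K ∩ π := mem_inter.mpr ⟨hP, hPπ⟩
    have e2 : R ∈ K ∩ π := mem_inter.mpr ⟨hR.1, hR.2.1⟩
    rw [hx, mem_singleton] at e1 e2
    rw [e1, ← e2] at hP2
    exact hP2 hR.2.2
  · intro he
    exact n1 (G.plane_eq h.eLn (fun h' => hP2 (mem_inter.mp h').2) hπ h.m1.1 he inter_subset_left hPπ hP1)

lemma Bd_card (h : Str G K Q π₁ π₂) : #(G.Bd K Q π₁ π₂) ≤ 3 := by
  rcases (G.Bd K Q π₁ π₂).eq_empty_or_nonempty with he | ⟨π₀, h0⟩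
  · rw [he]; simp
  have hq := h.hq
  obtain ⟨p1, p2, p3, p4, p5, p6, p7⟩ := h.Bd_props h0
  set n := π₀ ∩ π₂ with hn
  have hnL : n ∈ G.Ln := G.pl_meet _ p1 _ h.m2.1 p4
  have hQn : Q ∈ n := mem_inter.mpr ⟨p2, h.m2.2.2.1⟩
  have hsum := G.sum_ff (K := K) hnL Q
  have haa : G.aa K n Q = 0 := by
    have := G.aa_le (K := K) n Q
    rw [p6] at this; simpa using this
  rw [p6, haa, h.dl_eq_two] at hsum
  have t2 : π₂ ∈ G.thr n := G.mem_thr.mpr ⟨h.m2.1, inter_subset_right⟩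
  rw [← Finset.add_sum_erase _ _ t2, h.f2] at hsum
  have hsub : G.Bd K Q π₁ π₂ ⊆ (G.thr n).erase π₂ := by
    intro π hπ
    obtain ⟨r1, r2, r3, r4, r5, r6, r7⟩ := h.Bd_props hπ
    have e := h.ext_unique (G.pl_meet _ r1 _ h.m2.1 r4) hnL inter_subset_right inter_subset_right
      (mem_inter.mpr ⟨r2, h.m2.2.2.1⟩) hQn r6 p6
    exact mem_erase.mpr ⟨r4, G.mem_thr.mpr ⟨r1, e ▸ inter_subset_left⟩⟩
  have hn1 : π₁ ∉ G.thr n := by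
    intro hc
    have hc := (G.mem_thr.mp hc).2
    have : n = π₁ ∩ π₂ := G.ln_eq_of_sub hnL h.eLn (Finset.subset_inter hc inter_subset_right)
    exact p7 (this ▸ inter_subset_left)
  have hle := Finset.sum_le_sum_of_subset_of_nonneg (f := fun π => G.ff K Q π) hsub (by
    intro π hπ _
    rw [mem_erase, mem_thr] at hπ
    refine h.f_nonneg hπ.2.1 (hπ.2.2 hQn) ?_ hπ.1
    rintro rfl
    exact hn1 (G.mem_thr.mpr hπ.2))
  rw [Finset.sum_congr rfl (fun π hπ => (h.Bd_props hπ).2.2.2.2.1), Finset.sum_const, nsmul_eq_mul] at hle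
  simp only [Finset.card_empty] at hsum
  push_cast at hsum
  by_contra hc
  push Not at hc
  zify at hc hq
  nlinarith

lemma good (h : Str G K Q π₁ π₂) {P : α} (hP : P ∈ K) (hP1 : P ∈ π₁) (hP2 : P ∉ π₂) :
    ∃ π ∈ G.Bd K Q π₁ π₂ ∪ {π ∈ G.DD K Q | ¬ π₁ ∩ π₂ ⊆ π}, P ∈ π := by
  by_contra hc
  push Not at hc
  have hq := h.hq
  have hQP : Q ≠ P := fun h' => h.hQ (h' ▸ hP)
  have hT := G.nuc_tan h.h1 hP hP1
  have hs := h.sum_tan hP hT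
  have t1 : π₁ ∈ G.thr (G.ln Q P) :=
    G.mem_thr.mpr ⟨h.m1.1, G.ln_sub _ h.m1.1 Q h.m1.2.2.1 P hP1 hQP⟩
  rw [← Finset.add_sum_erase _ _ t1, h.f1, h.dl_eq_two] at hs
  have hf : ∀ π ∈ (G.thr (G.ln Q P)).erase π₁, G.ff K Q π =
      if G.aa K π Q = #(K ∩ π) then (q : ℤ) - 2 else 0 := by
    intro π hπ
    rw [mem_erase, mem_thr] at hπ
    obtain ⟨n1, hπP, hl⟩ := hπ
    have hQπ := hl (G.left_mem _ _)
    have hPπ := hl (G.right_mem _ _)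
    have n2 : π ≠ π₂ := fun h' => hP2 (h' ▸ hPπ)
    have hc' := fun hh => hc π hh hPπ
    split_ifs with hM
    · have h1 := h.abound hπP hQπ n1 n2
      rw [h.M_AA hπP hQπ hM] at h1
      have h2 : 0 < #(K ∩ π) := Finset.card_pos.mpr ⟨P, mem_inter.mpr ⟨hP, hPπ⟩⟩
      have h3 : #(K ∩ π) ≠ 1 := by
        intro h3
        apply hc'
        apply mem_union_left
        unfold Bd
        rw [mem_filter]
        exact ⟨hπP, hQπ, hM, h3, P, hP, hP1, hP2, hPπ⟩
      have h4 : G.aa K π Q = 2 := by omega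
      rw [h.f_M hM, h4]; push_cast; ring
    · rcases h.nonM_02 hπP hQπ hM with h0 | h0
      · exact h0
      · exfalso
        apply hc'
        apply mem_union_right
        rw [mem_filter, mem_DD]
        refine ⟨⟨hπP, hQπ, hM, h0⟩, fun he => n1 ?_⟩
        exact G.plane_eq h.eLn (fun h' => hP2 (mem_inter.mp h').2) hπP h.m1.1 he inter_subset_left hPπ hP1
  rw [Finset.sum_congr rfl hf, ← Finset.sum_filter, Finset.sum_const, nsmul_eq_mul] at hs
  generalize #{π ∈ (G.thr (G.ln Q P)).erase π₁ | G.aa K π Q = #(K ∩ π)} = j at hs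
  have hq' : (16 : ℤ) ≤ q := by exact_mod_cast hq
  have h1 : (1 : ℤ) < j := by
    by_contra hc; push Not at hc; nlinarith
  nlinarith

lemma Do_bound (h : Str G K Q π₁ π₂) : q ≤ 4 + #{π ∈ G.DD K Q | ¬ π₁ ∩ π₂ ⊆ π} := by
  have hsub : (K ∩ π₁) \ (K ∩ (π₁ ∩ π₂)) ⊆
      (G.Bd K Q π₁ π₂ ∪ {π ∈ G.DD K Q | ¬ π₁ ∩ π₂ ⊆ π}).biUnion (fun π => K ∩ (π ∩ π₁)) := by
    intro P hP
    simp only [mem_sdiff, mem_inter] at hP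
    obtain ⟨π, hπ, hPπ⟩ := h.good hP.1.1 hP.1.2 (fun h' => hP.2 ⟨hP.1.1, hP.1.2, h'⟩)
    rw [mem_biUnion]
    exact ⟨π, hπ, by simp only [mem_inter]; exact ⟨hP.1.1, hPπ, hP.1.2⟩⟩
  have c1 := Finset.card_le_card hsub
  have c2 := Finset.card_biUnion_le_card_mul (G.Bd K Q π₁ π₂ ∪ {π ∈ G.DD K Q | ¬ π₁ ∩ π₂ ⊆ π})
    (fun π => K ∩ (π ∩ π₁)) 1 (by
      intro π hπ
      rcases mem_union.mp hπ with h' | h'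
      · obtain ⟨r1, r2, r3, r4, r5, r6, r7⟩ := h.Bd_props h'
        exact G.nuc_inter h.h1 r1 r2 r3
      · rw [mem_filter, mem_DD] at h'
        refine G.nuc_inter h.h1 h'.1.1 h'.1.2.1 ?_
        rintro rfl
        exact h'.2 inter_subset_left)
  have c3 := Finset.card_union_le (G.Bd K Q π₁ π₂) {π ∈ G.DD K Q | ¬ π₁ ∩ π₂ ⊆ π}
  have c4 := h.Bd_card
  have c5 := h.eps
  have c6 := Finset.le_card_sdiff (K ∩ (π₁ ∩ π₂)) (K ∩ π₁)
  rw [h.m1.2.1] at c6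
  omega

lemma contra (h : Str G K Q π₁ π₂) : False := by
  classical
  have hd2 := h.dl_eq_two
  have hDe := h.De_bound
  have hDo := h.Do_bound
  have hsig := h.sig
  have heps := h.eps
  have ht := h.ht
  have hq := h.hq
  have hr := h.D_count (G.AA K Q π₁ π₂) (by
    intro P hP
    simp only [AA, mem_filter] at hP
    tauto)
  have hnt := h.D_count {P ∈ K | ¬ G.Tan K Q P} (by
    intro P hP
    rw [mem_filter] at hP
    exact ⟨hP.1, h.sec_out hP.1 hP.2⟩)
  have hsp : #{P ∈ K | ¬ G.Tan K Q P} + G.aa K univ Q = #K := by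
    have := Finset.card_filter_add_card_filter_not (s := K) (fun P => G.Tan K Q P)
    rw [G.aa_eq, Finset.inter_univ]; omega
  have hterm : ∀ π ∈ G.DD K Q, (if π₁ ∩ π₂ ⊆ π then (q : ℤ) - 2 else q - 4)
      - 2 * #(G.AA K Q π₁ π₂ ∩ π) ≤ #({P ∈ K | ¬ G.Tan K Q P} ∩ π) := by
    intro π hπ
    rw [mem_DD] at hπ
    obtain ⟨hπP, hQπ, hM, hf⟩ := hπ
    have n1 : π ≠ π₁ := by rintro rfl; exact hM (by rw [h.m1.2.1, h.m1.2.2.2])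
    have n2 : π ≠ π₂ := by rintro rfl; exact hM (by rw [h.m2.2.1, h.m2.2.2.2])
    have hk : G.aa K π Q + #({P ∈ K | ¬ G.Tan K Q P} ∩ π) = #(K ∩ π) := by
      have := Finset.card_filter_add_card_filter_not (s := K ∩ π) (fun P => G.Tan K Q P)
      have e1 : {P ∈ K | ¬ G.Tan K Q P} ∩ π = {P ∈ K ∩ π | ¬ G.Tan K Q P} := by
        ext P; simp only [mem_inter, mem_filter]; tauto
      rw [e1, ← this]; unfold aa; congr 2
    unfold ff tp at hf
    split_ifs with he
    · have := h.abound_e hπP he n1 n2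
      zify at this hk heps
      linarith
    · have := h.abound hπP hQπ n1 n2
      zify at this hk
      linarith
  have hsum := Finset.sum_le_sum hterm
  rw [Finset.sum_sub_distrib, ← Finset.mul_sum, ← Nat.cast_sum, ← Nat.cast_sum, hr, hnt,
    Finset.sum_ite, Finset.sum_const, Finset.sum_const, nsmul_eq_mul, nsmul_eq_mul] at hsum
  generalize #{π ∈ G.DD K Q | π₁ ∩ π₂ ⊆ π} = x at hDe hsum
  generalize #{π ∈ G.DD K Q | ¬ π₁ ∩ π₂ ⊆ π} = y at hDo hsum
  generalize #{P ∈ K | ¬ G.Tan K Q P} = w at hsum hsp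
  generalize #(G.AA K Q π₁ π₂) = r at hsum hsig
  unfold dl tt at hd2
  unfold tt at ht
  rw [show G.dl K Q = 2 from h.dl_eq_two] at hDe
  generalize G.aa K univ Q = s at *
  zify at hsp hsig heps hDo hq
  have h20 : (20 : ℤ) ≤ q := by
    have : (0 : ℤ) ≤ r := by positivity
    linarith
  have b1 : ((q : ℤ) - 8) * (q - 2) ≤ 2 * (x * (q - 2)) := by nlinarith
  have b2 : ((q : ℤ) - 4) * (q - 4) ≤ y * (q - 4) := by nlinarith
  nlinarith

end Str

/-- The structure lemma. -/
lemma structure_lemma (H : G.Hyp K) {Q : α} (hQ : Q ∉ K) (hq : 16 ≤ q)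
    (ht : 4 * G.tt K ≤ 9 * q - 16) (h2 : 1 < #(G.nucp K Q)) : 4 ≤ G.dl K Q := by
  obtain ⟨π₁, h1, π₂, h2, hne⟩ := Finset.one_lt_card.mp h2
  obtain ⟨m, hm⟩ := G.dl_even H hQ
  by_contra hc
  exact Str.contra (π₁ := π₁) (π₂ := π₂) ⟨H, hQ, h1, h2, hne, ht, hq, by omega⟩

end Geo
end CapProof


namespace CapProof
open Finset

lemma conc (q t t0 t1 : ℝ) (h01 : t0 < t1) (h0 : t0 ≤ t) (h1 : t ≤ t1)
    (g : ℝ → ℝ) (hg : ∀ t, g t = 8*(q^2+q+2-t)*(t-q-1)*(3*(q^2+q+1)-(q+4)*t)-4*q*(q-1)*(q^3-1+t)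
      -q*(q-1)*t*(q+1)*(t-q-1)) (g0 : 0 < g t0) (g1 : 0 < g t1)
    (hh : 0 ≤ -8*(q+4)*(t0+t1+t) + 24*(q^2+q+1) + 8*(q+4)*(q^2+2*q+3) + q^3 - q) : 0 < g t := by
  have key : (t1-t0)*g t = (t1-t)*g t0 + (t-t0)*g t1 + (t-t0)*(t1-t)*(t1-t0)*
      (-8*(q+4)*(t0+t1+t) + 24*(q^2+q+1) + 8*(q+4)*(q^2+2*q+3) + q^3 - q) := by
    rw [hg, hg, hg]; ring
  have p1 : 0 ≤ (t-t0)*(t1-t)*(t1-t0)*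
      (-8*(q+4)*(t0+t1+t) + 24*(q^2+q+1) + 8*(q+4)*(q^2+2*q+3) + q^3 - q) := by
    have a1 : 0 ≤ t - t0 := by linarith
    have a2 : 0 ≤ t1 - t := by linarith
    have a3 : 0 ≤ t1 - t0 := by linarith
    positivity
  have p2 : 0 < (t1-t)*g t0 + (t-t0)*g t1 := by
    rcases eq_or_lt_of_le h0 with e | e
    · rw [← e]; nlinarith [mul_pos (sub_pos.mpr h01) g0]
    · have := mul_pos (sub_pos.mpr e) g1
      have := mul_nonneg (sub_nonneg.mpr h1) g0.le
      linarith
  have p3 : 0 < (t1 - t0) * g t := by linarith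
  exact (pos_iff_pos_of_mul_pos p3).mp (by linarith)

lemma num64 (q t : ℝ) (hq : 64 ≤ q) (h0 : 2*q-3 ≤ t) (h1 : 72*(t+3) ≤ 161*q) :
    4*q*(q-1)*(q^3-1+t) + q*(q-1)*t*(q+1)*(t-q-1) <
      8*(q^2+q+2-t)*(t-q-1)*(3*(q^2+q+1)-(q+4)*t) := by
  have := conc q t (2*q-3) (161*q/72-3) (by linarith) h0 (by linarith)
    (fun t => 8*(q^2+q+2-t)*(t-q-1)*(3*(q^2+q+1)-(q+4)*t)-4*q*(q-1)*(q^3-1+t)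
      -q*(q-1)*t*(q+1)*(t-q-1)) (fun t => rfl) ?_ ?_ ?_
  · linarith
  · obtain ⟨a, ha, rfl⟩ : ∃ a, 0 ≤ a ∧ q = 64 + a := ⟨q - 64, by linarith, by ring⟩
    ring_nf; positivity
  · obtain ⟨a, ha, rfl⟩ : ∃ a, 0 ≤ a ∧ q = 64 + a := ⟨q - 64, by linarith, by ring⟩
    ring_nf; positivity
  · have : t ≤ 3 * q := by linarith
    nlinarith [mul_le_mul_of_nonneg_left hq (sq_nonneg q), mul_le_mul_of_nonneg_left this (by linarith : 0 ≤ q + 4)]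

lemma num_final (q t k d S2 N p : ℤ) (hq : q = 8 ∨ q = 16 ∨ q = 32 ∨ 64 ≤ q)
    (ht0 : 0 ≤ t + 3) (ht : (t + 3) ^ 2 ≤ 5 * q ^ 2) (hk : k = q ^ 2 + q + 2 - t) (hd : d = t - q - 1)
    (hd1 : 1 ≤ d)
    (hN : 0 ≤ N) (hS : 0 ≤ S2)
    (i1 : 2 * (k * (k - 1) * d) ≤ k * (t * (q + 1) * d) - S2)
    (i2 : 3 * (k * (k - 1) * d) - (k * (t * (q + 1) * d) - S2) ≤ q * (q - 1) * p)
    (i3 : 2 * p ≤ q ^ 3 - 1 + t + N)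
    (n0 : t < 2 * q - 1 → N = 0) (n1 : 16 ≤ q → t < 2 * q + 3 → N = 0)
    (n2 : 16 ≤ q → 4 * N ≤ t * (q + 1) * d) (n3 : 16 ≤ q → 4 * (2 * q - 1) * N ≤ S2) : False := by
  have hq8 : 8 ≤ q := by omega
  have hu : 72 * (t + 3) ≤ 161 * q := by nlinarith
  have hk0 : 0 < k := by nlinarith
  have hlow : 2 * (k - 1) ≤ t * (q + 1) := by
    by_contra hc
    push Not at hc
    have : 0 < k * d := by positivity
    nlinarith
  have hlow' : 2 * q - 3 ≤ t := by
    by_contra hc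
    push Not at hc
    nlinarith
  rcases hq with rfl | rfl | rfl | hq
  · have : t = 14 := by omega
    subst this
    have := n0 (by norm_num)
    subst hk hd this
    norm_num at *
    omega
  · have h1 : t ≤ 32 := by omega
    have := n1 le_rfl (by omega)
    subst this hk hd
    have h2 : 29 ≤ t := by omega
    interval_cases t <;> norm_num at * <;> omega
  · have h1 : t ≤ 68 := by omega
    have h2 : 61 ≤ t := by omega
    subst hk hd
    have n2 := n2 (by norm_num)
    have n3 := n3 (by norm_num)
    interval_cases t <;> norm_num at * <;> omega
  · have n2 := n2 (by omega)
    have hx := num64 (q : ℝ) t (by exact_mod_cast hq) (by exact_mod_cast hlow') (by exact_mod_cast hu)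
    have hx' : 4*q*(q-1)*(q^3-1+t) + q*(q-1)*t*(q+1)*(t-q-1) <
      8*(q^2+q+2-t)*(t-q-1)*(3*(q^2+q+1)-(q+4)*t) := by exact_mod_cast hx
    have hqq : 0 ≤ q * (q - 1) := by nlinarith
    have e1 := mul_le_mul_of_nonneg_left i3 hqq
    have e2 := mul_le_mul_of_nonneg_left n2 hqq
    have e3 : 3 * (k * (k - 1) * d) - k * (t * (q + 1) * d) = (q^2+q+2-t)*(t-q-1)*(3*(q^2+q+1)-(q+4)*t) := by
      rw [hk, hd]; ring
    rw [hd] at e2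
    nlinarith

variable {α : Type*} [Fintype α] [DecidableEq α] {q : ℕ}

theorem Geo.final (G : Geo α q) {K : Finset α} (H : G.Hyp K)
    (hq : q = 8 ∨ q = 16 ∨ q = 32 ∨ q = 64 ∨ 128 ≤ q) (hK : #K ≤ q ^ 2)
    (ht : (G.tt K + 3) ^ 2 ≤ 5 * (q : ℤ) ^ 2) : False := by
  classical
  have hq8 : (8 : ℤ) ≤ q := by have : 8 ≤ q := by omega
                               exact_mod_cast this
  have hKz : (#K : ℤ) ≤ (q : ℤ) ^ 2 := by exact_mod_cast hK
  have htd : G.tt K = (q : ℤ) ^ 2 + q + 2 - #K := rfl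
  have ht0 : 0 ≤ G.tt K := by linarith
  have ht3 : G.tt K < 3 * q - 3 := by nlinarith
  set B := {Q ∈ univ \ K | 1 < #(G.nucp K Q)} with hB
  have hoff : ∀ Q ∈ univ \ K, Q ∉ K := by simp
  have hBK : ∀ Q ∈ B, Q ∉ K := fun Q hQ => hoff Q (mem_filter.mp hQ).1
  have hnn : ∀ Q ∈ univ \ K, 0 ≤ G.dl K Q := fun Q hQ => G.dl_nonneg H (hoff Q hQ)
  have hsig : ∀ Q ∈ B, 2 * (q : ℤ) - 1 ≤ G.aa K univ Q := by
    intro Q hQ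
    obtain ⟨π₁, h1, π₂, h2, hne⟩ := Finset.one_lt_card.mp (mem_filter.mp hQ).2
    have s := G.sigma_two h1 h2
    have m1 := G.mem_nucp.mp h1
    have i := G.nuc_inter h2 m1.1 m1.2.2.1 hne
    omega
  have h4t : 16 ≤ q → 4 * G.tt K ≤ 9 * q - 16 := by
    intro h16
    rcases hq with rfl | rfl | rfl | rfl | h128
    · omega
    · norm_num at *
      by_contra hc
      have : 33 ≤ G.tt K := by omega
      nlinarith
    · norm_num at *
      by_contra hc
      have : 69 ≤ G.tt K := by omega
      nlinarith
    · norm_num at *; nlinarith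
    · have : (128 : ℤ) ≤ q := by exact_mod_cast h128
      nlinarith
  have hdl4 : 16 ≤ q → ∀ Q ∈ B, 4 ≤ G.dl K Q := fun h16 Q hQ =>
    G.structure_lemma H (hBK Q hQ) h16 (h4t h16) (mem_filter.mp hQ).2
  have i3 : 2 * (#(G.qpl K) : ℤ) ≤ (q : ℤ) ^ 3 - 1 + G.tt K + #B := by
    have h1 := G.I3 H
    have h2 : ∑ Q ∈ univ \ K, #(G.nucp K Q) ≤ ∑ Q ∈ univ \ K, (1 + if 1 < #(G.nucp K Q) then 1 else 0) := by
      refine Finset.sum_le_sum (fun Q hQ => ?_)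
      have := G.nuc_le_two H (hoff Q hQ) ht3
      split_ifs <;> omega
    rw [Finset.sum_add_distrib, ← Finset.card_eq_sum_ones, ← Finset.card_filter, ← h1] at h2
    have h3 := G.card_off K
    have h4 : (2 * #(G.qpl K) : ℤ) ≤ #(univ \ K) + #B := by exact_mod_cast h2
    linarith
  have hS2 : 0 ≤ G.S2 K := by
    unfold S2
    exact Finset.sum_nonneg (fun Q hQ => mul_nonneg (hnn Q hQ) (by positivity))
  have nz : ∀ c : ℤ, (∀ Q ∈ B, c ≤ G.tt K) → G.tt K < c → (#B : ℤ) = 0 := by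
    intro c hc hlt
    have : B = ∅ := by
      rw [Finset.eq_empty_iff_forall_notMem]
      intro Q hQ
      have := hc Q hQ
      omega
    simp [this]
  refine num_final q (G.tt K) #K ((q : ℤ) ^ 2 + 1 - #K) (G.S2 K) #B #(G.qpl K) ?_ (by linarith) ht
    (by rw [htd]; ring) (by rw [htd]; ring) (by linarith) (by positivity) hS2 (G.I1 H.cap) (G.I2 H.cap) i3
    ?_ ?_ ?_ ?_
  · omega
  · refine nz _ (fun Q hQ => ?_)
    have h1 := hsig Q hQ
    have h2 := G.dl_nonneg H (hBK Q hQ)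
    unfold dl at h2
    linarith
  · intro h16
    refine nz _ (fun Q hQ => ?_)
    have h1 := hsig Q hQ
    have h2 := hdl4 (by exact_mod_cast h16) Q hQ
    unfold dl at h2
    linarith
  · intro h16
    rw [← G.sum_dl H.cap]
    have h1 := Finset.sum_le_sum_of_subset_of_nonneg (f := fun Q => G.dl K Q) (Finset.filter_subset _ _ : B ⊆ univ \ K)
      (fun Q hQ _ => hnn Q hQ)
    refine le_trans ?_ h1
    have h2 := Finset.card_nsmul_le_sum B (fun Q => G.dl K Q) 4 (hdl4 (by exact_mod_cast h16))
    rw [nsmul_eq_mul] at h2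
    linarith
  · intro h16
    have h1 := Finset.sum_le_sum_of_subset_of_nonneg (f := fun Q => G.dl K Q * G.aa K univ Q)
      (Finset.filter_subset _ _ : B ⊆ univ \ K)
      (fun Q hQ _ => mul_nonneg (hnn Q hQ) (by positivity))
    refine le_trans ?_ h1
    have h2 := Finset.card_nsmul_le_sum B (fun Q => G.dl K Q * G.aa K univ Q) (4 * (2 * q - 1)) (by
      intro Q hQ
      have a1 := hdl4 (by exact_mod_cast h16) Q hQ
      have a2 := hsig Q hQ
      exact mul_le_mul a1 a2 (by linarith) (by linarith))
    rw [nsmul_eq_mul] at h2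
    linarith

end CapProof


namespace CapProof
open Finset

variable {F : Type*} [Field F] [Fintype F]

abbrev Pt (F : Type*) [Field F] := Projectivization F (Fin (3 + 1) → F)

noncomputable instance : Fintype (Pt F) := Fintype.ofFinite _
noncomputable instance : DecidableEq (Pt F) := Classical.decEq _

open Classical in
/-- points of a subspace -/
noncomputable def pts (W : Submodule F (Fin (3 + 1) → F)) : Finset (Pt F) :=
  univ.filter (fun P => P.submodule ≤ W)

lemma mem_pts {W : Submodule F (Fin (3 + 1) → F)} {P : Pt F} : P ∈ pts W ↔ P.submodule ≤ W := by
  simp [pts]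

lemma sub_le_iff {W : Submodule F (Fin (3 + 1) → F)} {P : Pt F} : P.submodule ≤ W ↔ P.rep ∈ W := by
  rw [Projectivization.submodule_eq, Submodule.span_singleton_le_iff_mem]

lemma pts_le {W W' : Submodule F (Fin (3 + 1) → F)} : pts W ⊆ pts W' ↔ W ≤ W' := by
  constructor
  · intro h w hw
    by_cases h0 : w = 0
    · rw [h0]; exact W'.zero_mem
    · have : Projectivization.mk F w h0 ∈ pts W := by
        rw [mem_pts, Projectivization.submodule_mk, Submodule.span_singleton_le_iff_mem]; exact hw
      have := h this
      rw [mem_pts, Projectivization.submodule_mk, Submodule.span_singleton_le_iff_mem] at this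
      exact this
  · intro h P hP
    rw [mem_pts] at hP ⊢
    exact hP.trans h

lemma pts_inj {W W' : Submodule F (Fin (3 + 1) → F)} (h : pts W = pts W') : W = W' :=
  le_antisymm (pts_le.mp h.subset) (pts_le.mp h.symm.subset)

lemma pts_inter (W W' : Submodule F (Fin (3 + 1) → F)) : pts W ∩ pts W' = pts (W ⊓ W') := by
  ext P; simp [mem_pts]

lemma card_pts (W : Submodule F (Fin (3 + 1) → F)) :
    #(pts W) = ∑ i ∈ range (finrank F W), (Fintype.card F) ^ i := by
  have h1 := Projectivization.card_of_finrank F W rfl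
  rw [Nat.card_eq_fintype_card (α := F)] at h1
  rw [← h1]
  have h2 : (pts W : Set (Pt F)) = Set.range (Projectivization.map W.subtype W.subtype_injective) := by
    ext P
    rw [Finset.mem_coe, mem_pts, sub_le_iff]
    constructor
    · intro h
      refine ⟨Projectivization.mk F ⟨P.rep, h⟩ ?_, ?_⟩
      · intro h0
        exact P.rep_nonzero (congrArg Subtype.val h0)
      · rw [Projectivization.map_mk]
        exact P.mk_rep
    · rintro ⟨R, rfl⟩
      rw [← sub_le_iff]
      induction R using Projectivization.ind with
      | h v hv =>
        rw [Projectivization.map_mk, Projectivization.submodule_mk, Submodule.span_singleton_le_iff_mem]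
        exact v.2
  rw [← Set.ncard_coe_finset, h2, ← Set.image_univ,
    Set.ncard_image_of_injective _ (Projectivization.map_injective _ _), Set.ncard_univ]

lemma fr_sup_one {L : Submodule F (Fin (3 + 1) → F)} {P : Pt F} (h : ¬ P.submodule ≤ L) :
    finrank F ↥(L ⊔ P.submodule) = finrank F L + 1 := by
  have h1 := Submodule.finrank_add_le_finrank_add_finrank L P.submodule
  rw [P.finrank_submodule] at h1
  by_contra hc
  have h2 : finrank F ↥(L ⊔ P.submodule) ≤ finrank F L := by omega
  have h3 := Submodule.eq_of_le_of_finrank_le (le_sup_left : L ≤ L ⊔ P.submodule) h2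
  exact h (h3 ▸ le_sup_right)

lemma not_le_of_ne {P Q : Pt F} (h : P ≠ Q) : ¬ Q.submodule ≤ P.submodule := by
  intro hc
  have := Submodule.eq_of_le_of_finrank_le hc (by rw [P.finrank_submodule, Q.finrank_submodule])
  exact h (Projectivization.submodule_injective this.symm)

lemma fr_two {P Q : Pt F} (h : P ≠ Q) : finrank F ↥(P.submodule ⊔ Q.submodule) = 2 := by
  rw [fr_sup_one (not_le_of_ne h), P.finrank_submodule]

open Classical in
noncomputable def flats (F : Type*) [Field F] [Fintype F] (n : ℕ) : Finset (Finset (Pt F)) :=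
  univ.filter (fun s => ∃ W : Submodule F (Fin (3 + 1) → F), finrank F W = n ∧ pts W = s)

lemma mem_flats {n : ℕ} {s : Finset (Pt F)} : s ∈ flats F n ↔
    ∃ W : Submodule F (Fin (3 + 1) → F), finrank F W = n ∧ pts W = s := by
  simp [flats]

lemma card_flat {n : ℕ} {s : Finset (Pt F)} (h : s ∈ flats F n) :
    #s = ∑ i ∈ range n, (Fintype.card F) ^ i := by
  obtain ⟨W, h1, rfl⟩ := mem_flats.mp h
  rw [card_pts, h1]

lemma card_Pt : Fintype.card (Pt F) = Fintype.card F ^ 3 + Fintype.card F ^ 2 + Fintype.card F + 1 := by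
  have h : pts (⊤ : Submodule F (Fin (3 + 1) → F)) = univ := by ext P; simp [mem_pts]
  rw [← Finset.card_univ, ← h, card_pts, finrank_top, Module.finrank_fin_fun]
  simp [Finset.sum_range_succ]; ring

lemma pl_unique' {l : Finset (Pt F)} (hl : l ∈ flats F 2) {P : Pt F} (hP : P ∉ l) :
    #{π ∈ flats F 3 | l ⊆ π ∧ P ∈ π} = 1 := by
  obtain ⟨L, h1, rfl⟩ := mem_flats.mp hl
  rw [mem_pts] at hP
  rw [Finset.card_eq_one]
  refine ⟨pts (L ⊔ P.submodule), ?_⟩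
  ext π
  rw [mem_filter, mem_singleton, mem_flats]
  constructor
  · rintro ⟨⟨W, h2, rfl⟩, h3, h4⟩
    rw [pts_le] at h3
    rw [mem_pts] at h4
    rw [Submodule.eq_of_le_of_finrank_le (sup_le h3 h4) (by rw [fr_sup_one hP]; omega)]
  · rintro rfl
    exact ⟨⟨_, by rw [fr_sup_one hP]; omega, rfl⟩, pts_le.mpr le_sup_left, mem_pts.mpr le_sup_right⟩

lemma pl_thru' {l : Finset (Pt F)} (hl : l ∈ flats F 2) :
    #{π ∈ flats F 3 | l ⊆ π} = Fintype.card F + 1 := by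
  have h1 : ∀ π : Finset (Pt F), #((univ \ l) ∩ π) = ∑ x ∈ univ \ l, if x ∈ π then 1 else 0 := by
    intro π
    rw [← Finset.filter_mem_eq_inter, Finset.card_filter]
  have h2 : ∑ π ∈ flats F 3 with l ⊆ π, #((univ \ l) ∩ π) = #(univ \ l) := by
    simp_rw [h1]
    rw [Finset.sum_comm, Finset.card_eq_sum_ones]
    refine Finset.sum_congr rfl (fun x hx => ?_)
    rw [← Finset.card_filter, Finset.filter_filter]
    exact pl_unique' hl (by simpa using hx)
  have h3 : ∀ π ∈ {π ∈ flats F 3 | l ⊆ π}, #((univ \ l) ∩ π) = Fintype.card F ^ 2 := by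
    intro π hπ
    rw [mem_filter] at hπ
    have : (univ \ l) ∩ π = π \ l := by ext; simp [and_comm]
    rw [this, Finset.card_sdiff_of_subset hπ.2, card_flat hπ.1, card_flat hl]
    simp [Finset.sum_range_succ]
  rw [Finset.sum_congr rfl h3, Finset.sum_const, Finset.card_sdiff_of_subset (subset_univ _),
    Finset.card_univ, card_Pt, card_flat hl] at h2
  have hq : 0 < Fintype.card F := Fintype.card_pos
  simp only [Finset.sum_range_succ, smul_eq_mul, range_zero, sum_empty, pow_zero, pow_one] at h2
  have h4 : #{π ∈ flats F 3 | l ⊆ π} * Fintype.card F ^ 2 = (Fintype.card F + 1) * Fintype.card F ^ 2 := by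
    rw [h2]
    have : Fintype.card F ^ 3 + Fintype.card F ^ 2 + Fintype.card F + 1 = Fintype.card F ^ 3 + Fintype.card F ^ 2
      + (0 + 1 + Fintype.card F) := by ring
    rw [this, Nat.add_sub_cancel]; ring
  exact Nat.eq_of_mul_eq_mul_right (by positivity) h4

noncomputable def PG (F : Type*) [Field F] [Fintype F] : Geo (Pt F) (Fintype.card F) where
  Ln := flats F 2
  Pl := flats F 3
  ln P Q := pts (P.submodule ⊔ Q.submodule)
  card_all := card_Pt
  ln_mem P Q h := mem_flats.mpr ⟨_, fr_two h, rfl⟩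
  left_mem P Q := mem_pts.mpr le_sup_left
  right_mem P Q := mem_pts.mpr le_sup_right
  ln_unique := by
    intro l hl P hP Q hQ hPQ
    obtain ⟨L, h1, rfl⟩ := mem_flats.mp hl
    rw [mem_pts] at hP hQ
    rw [Submodule.eq_of_le_of_finrank_le (sup_le hP hQ) (by rw [fr_two hPQ, h1])]
  ln_sub := by
    intro π hπ P hP Q hQ _
    obtain ⟨W, h1, rfl⟩ := mem_flats.mp hπ
    rw [mem_pts] at hP hQ
    exact pts_le.mpr (sup_le hP hQ)
  card_ln l hl := by rw [card_flat hl]; simp [Finset.sum_range_succ]; ring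
  card_pl l hl := by rw [card_flat hl]; simp [Finset.sum_range_succ]; ring
  pl_thru l hl := pl_thru' hl
  pl_unique l hl P hP := pl_unique' hl hP
  meet := by
    intro π hπ l hl m hm hlπ hmπ
    obtain ⟨W, h1, rfl⟩ := mem_flats.mp hπ
    obtain ⟨L, h2, rfl⟩ := mem_flats.mp hl
    obtain ⟨M, h3, rfl⟩ := mem_flats.mp hm
    rw [pts_le] at hlπ hmπ
    have h4 := Submodule.finrank_sup_add_finrank_inf_eq L M
    have h5 := Submodule.finrank_mono (sup_le hlπ hmπ)
    have h6 : L ⊓ M ≠ ⊥ := by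
      intro h; rw [h, finrank_bot] at h4; omega
    obtain ⟨v, hv, hv0⟩ := Submodule.exists_mem_ne_zero_of_ne_bot h6
    refine ⟨Projectivization.mk F v hv0, ?_, ?_⟩
    · rw [mem_pts, Projectivization.submodule_mk, Submodule.span_singleton_le_iff_mem]; exact hv.1
    · rw [mem_pts, Projectivization.submodule_mk, Submodule.span_singleton_le_iff_mem]; exact hv.2
  pl_meet := by
    intro π hπ π' hπ' hne
    obtain ⟨W, h1, rfl⟩ := mem_flats.mp hπ
    obtain ⟨W', h2, rfl⟩ := mem_flats.mp hπ'
    rw [mem_flats]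
    refine ⟨W ⊓ W', ?_, (pts_inter _ _).symm⟩
    have h4 := Submodule.finrank_sup_add_finrank_inf_eq W W'
    have h5 := Submodule.finrank_le (W ⊔ W')
    rw [Module.finrank_fin_fun] at h5
    by_contra hc
    have e1 := Submodule.eq_of_le_of_finrank_le (le_sup_left : W ≤ W ⊔ W') (by
      have := Submodule.finrank_mono (le_sup_left : W ≤ W ⊔ W'); omega)
    have e2 := Submodule.eq_of_le_of_finrank_le (le_sup_right : W' ≤ W ⊔ W') (by
      have := Submodule.finrank_mono (le_sup_left : W ≤ W ⊔ W'); omega)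
    exact hne (by rw [e1]; rw [← e2])

end CapProof


namespace CapProof
open Finset

variable {F : Type*} [Field F] [Fintype F]

lemma D_det (x y z : Fin 3 → F) : D x y z = (Matrix.of ![x, y, z]).det := by
  rw [Matrix.det_fin_three]
  unfold D
  simp
  ring

lemma D_ne {W : Submodule F (Fin (3 + 1) → F)} (ψ : (Fin (3 + 1) → F) →ₗ[F] (Fin 3 → F))
    (hψ : ∀ w ∈ W, ψ w = 0 → w = 0) {P R S : Pt F} (hP : P ∈ pts W) (hR : R ∈ pts W) (hS : S ∈ pts W)
    (hPR : P ≠ R) (h : S ∉ pts (P.submodule ⊔ R.submodule)) : D (ψ P.rep) (ψ R.rep) (ψ S.rep) ≠ 0 := by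
  intro h0
  rw [D_det, ← Matrix.exists_vecMul_eq_zero_iff] at h0
  obtain ⟨c, hc, hc0⟩ := h0
  rw [mem_pts, sub_le_iff] at *
  have h1 : c 0 • P.rep + c 1 • R.rep + c 2 • S.rep = 0 := by
    apply hψ
    · exact W.add_mem (W.add_mem (W.smul_mem _ hP) (W.smul_mem _ hR)) (W.smul_mem _ hS)
    · rw [← hc0]
      ext i
      simp [Matrix.vecMul, dotProduct, Fin.sum_univ_three]
  have hpP : P.rep ∈ P.submodule := sub_le_iff.mp le_rfl
  have hrR : R.rep ∈ R.submodule := sub_le_iff.mp le_rfl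
  by_cases c2 : c 2 = 0
  · rw [c2, zero_smul, add_zero] at h1
    by_cases c1 : c 1 = 0
    · rw [c1, zero_smul, add_zero, smul_eq_zero] at h1
      rcases h1 with h1 | h1
      · apply hc
        ext i; fin_cases i <;> simp [h1, c1, c2]
      · exact P.rep_nonzero h1
    · apply not_le_of_ne hPR
      rw [sub_le_iff]
      have : R.rep = (-(c 1)⁻¹ * c 0) • P.rep := by
        have e : c 1 • R.rep = - (c 0 • P.rep) := eq_neg_iff_add_eq_zero.mpr ((add_comm _ _).trans h1)
        rw [mul_smul, neg_smul, ← smul_neg, ← e, smul_smul, inv_mul_cancel₀ c1, one_smul]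
      rw [this]
      exact Submodule.smul_mem _ _ hpP
  · apply h
    have : S.rep = -(c 2)⁻¹ • (c 0 • P.rep + c 1 • R.rep) := by
      have e : c 2 • S.rep = - (c 0 • P.rep + c 1 • R.rep) := eq_neg_iff_add_eq_zero.mpr ((add_comm _ _).trans h1)
      rw [neg_smul, ← smul_neg, ← e, smul_smul, inv_mul_cancel₀ c2, one_smul]
    rw [this]
    exact Submodule.smul_mem _ _ (Submodule.add_mem _
      (Submodule.smul_mem _ _ (Submodule.mem_sup_left hpP)) (Submodule.smul_mem _ _ (Submodule.mem_sup_right hrR)))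

lemma exists_psi {W : Submodule F (Fin (3 + 1) → F)} (hW : finrank F W = 3) :
    ∃ ψ : (Fin (3 + 1) → F) →ₗ[F] (Fin 3 → F), ∀ w ∈ W, ψ w = 0 → w = 0 := by
  let e : W ≃ₗ[F] (Fin 3 → F) := LinearEquiv.ofFinrankEq _ _ (by rw [hW, Module.finrank_fin_fun])
  obtain ⟨ψ, h⟩ := LinearMap.exists_extend e.toLinearMap
  refine ⟨ψ, fun w hw h0 => ?_⟩
  have := LinearMap.congr_fun h ⟨w, hw⟩
  simp only [LinearMap.comp_apply, Submodule.subtype_apply, LinearEquiv.coe_coe] at this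
  rw [h0] at this
  have := (e.map_eq_zero_iff).mp this.symm
  exact congrArg Subtype.val this

lemma p1_PG [CharP F 2] {K : Finset (Pt F)} (hK : (PG F).Cap K) : ∀ π ∈ (PG F).Pl, ∀ Q ∈ π, Q ∉ K → ∀ P ∈ K, ∀ R ∈ K,
    P ≠ R → P ∈ π → R ∈ π → Q ∈ (PG F).ln P R → (PG F).aa K π Q + #(K ∩ π) ≤ Fintype.card F + 2 := by
  classical
  intro π hπ Q hQπ hQ P hP R hR hPR hPπ hRπ hQR
  obtain ⟨W, hW, rfl⟩ := mem_flats.mp hπ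
  obtain ⟨ψ, hψ⟩ := exists_psi hW
  have hQP : Q ≠ P := fun h => hQ (h ▸ hP)
  have hRQ := (PG F).mem_swap hPR hQR hQP
  have hRQ' : R.rep ∈ P.submodule ⊔ Q.submodule := sub_le_iff.mp (mem_pts.mp hRQ)
  rw [P.submodule_eq, Q.submodule_eq, Submodule.mem_sup] at hRQ'
  obtain ⟨y, hy, z, hz, hyz⟩ := hRQ'
  obtain ⟨a, rfl⟩ := Submodule.mem_span_singleton.mp hy
  obtain ⟨b, rfl⟩ := Submodule.mem_span_singleton.mp hz
  unfold Geo.aa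
  refine arc_alg (fun X : Pt F => ψ X.rep) (ψ Q.rep) (K ∩ pts W) _ (filter_subset _ _) ?_ ?_ ?_ P R
    (mem_inter.mpr ⟨hP, hPπ⟩) (mem_inter.mpr ⟨hR, hRπ⟩) hPR a b ?_
  · intro x hx y hy z hz hxy hxz hyz
    rw [mem_inter] at hx hy hz
    exact D_ne ψ hψ hx.2 hy.2 hz.2 hxy (hK x hx.1 y hy.1 z hz.1 hxy hxz hyz)
  · exact (PG F).plane_le hK Fintype.card_pos hπ
  · intro x hx y hy hyx
    rw [mem_filter, mem_inter] at hx
    rw [mem_inter] at hy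
    have hxQ : x ≠ Q := fun h => hQ (h ▸ hx.1.1)
    refine D_ne ψ hψ hx.1.2 hQπ hy.2 hxQ (fun hc => ?_)
    exact hx.2 y hy.1 hyx ((PG F).mem_swap hxQ hc hyx)
  · rw [← hyz, map_add, map_smul, map_smul]

lemma coll_iff {P R S : Pt F} (hPR : P ≠ R) : Coll3 P R S ↔ S ∈ (PG F).ln P R := by
  show _ ↔ S ∈ pts _
  rw [mem_pts]
  unfold Coll3
  constructor
  · intro h
    by_contra hc
    rw [fr_sup_one hc, fr_two hPR] at h
    omega
  · intro h
    rw [sup_eq_left.mpr h, fr_two hPR]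

lemma coll_rot {P R S : Pt F} (h : Coll3 P R S) : Coll3 R S P := by
  unfold Coll3 at *
  rwa [sup_comm, ← sup_assoc]

lemma hyp_PG [CharP F 2] {K : Finset (Pt F)} (hK : IsCompleteCap (K : Set (PGPoint F 3)))
    (hq : 2 < Fintype.card F) (he : Even (Fintype.card F)) : (PG F).Hyp K := by
  have hcap : (PG F).Cap K := fun P hP R hR S hS h1 h2 h3 hc =>
    hK.1 P hP R hR S hS h1 h2 h3 ((coll_iff h1).mpr hc)
  refine ⟨hcap, ?_, p1_PG hcap, hq, he⟩
  intro Q hQ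
  have h := hK.2 Q (by simpa using hQ)
  unfold IsCap at h
  push Not at h
  obtain ⟨A, hA, B, hB, C, hC, hAB, hAC, hBC, hc⟩ := h
  simp only [Set.mem_insert_iff, mem_coe] at hA hB hC
  have key : ∀ A B C : Pt F, A = Q → (B = Q ∨ B ∈ K) → (C = Q ∨ C ∈ K) → A ≠ B → A ≠ C → B ≠ C →
      Coll3 B C A → ∃ P ∈ K, ∃ R ∈ K, P ≠ R ∧ Q ∈ (PG F).ln P R := by
    intro A B C hA hB hC hAB hAC hBC hc
    subst hA
    exact ⟨B, hB.resolve_left hAB.symm, C, hC.resolve_left hAC.symm, hBC, (coll_iff hBC).mp hc⟩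
  rcases hA with hA' | hA'
  · exact key A B C hA' hB hC hAB hAC hBC (coll_rot hc)
  rcases hB with hB' | hB'
  · exact key B C A hB' hC (Or.inr hA') hBC hAB.symm hAC.symm (coll_rot (coll_rot hc))
  rcases hC with hC' | hC'
  · exact key C A B hC' (Or.inr hA') (Or.inr hB') hAC.symm hBC.symm hAB hc
  · exact absurd hc (hK.1 A hA' B hB' C hC' hAB hAC hBC)

lemma q_cases (h8 : 8 ≤ Fintype.card F) [CharP F 2] : Fintype.card F = 8 ∨ Fintype.card F = 16 ∨
    Fintype.card F = 32 ∨ Fintype.card F = 64 ∨ 128 ≤ Fintype.card F := by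
  obtain ⟨n, -, hn⟩ := FiniteField.card F 2
  rw [hn] at h8 ⊢
  have : 3 ≤ (n : ℕ) := by
    by_contra hc
    have : (n : ℕ) ≤ 2 := by omega
    have := Nat.pow_le_pow_right (show 0 < 2 by norm_num) this
    omega
  rcases Nat.lt_or_ge n 7 with h7 | h7
  · generalize (n : ℕ) = m at *
    interval_cases m <;> simp
  · have := Nat.pow_le_pow_right (show 0 < 2 by norm_num) h7
    omega

end CapProof

open CapProof in
theorem stmt9 (F : Type*) [Field F] [Fintype F] (q : ℕ) (hcard : Fintype.card F = q)
    (hqeven : Even q) (hq : 8 ≤ q)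
    (K : Set (PGPoint F 3)) (hK : IsCompleteCap K) (hk : K.ncard < q ^ 2 + 1) :
    (K.ncard : ℝ) < (q : ℝ) ^ 2 - (Real.sqrt 5 - 1) * (q : ℝ) + 5 := by
  subst hcard
  obtain ⟨K', rfl⟩ := (Set.toFinite K).exists_finset_coe
  rw [Set.ncard_coe_finset] at hk ⊢
  have hc2 : ringChar F = 2 := FiniteField.even_card_iff_char_two.mpr (Nat.even_iff.mp hqeven)
  have : CharP F 2 := by rw [← hc2]; infer_instance
  have H := hyp_PG hK (by omega) hqeven
  by_contra hcon
  push Not at hcon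
  refine (PG F).final H (q_cases hq) (by omega) ?_
  have h1 : (((PG F).tt K' : ℤ) : ℝ) + 3 ≤ Real.sqrt 5 * (Fintype.card F : ℝ) := by
    unfold Geo.tt
    push_cast
    linarith
  have h0 : (0 : ℝ) ≤ (((PG F).tt K' : ℤ) : ℝ) + 3 := by
    have : (0 : ℤ) ≤ (PG F).tt K' + 3 := by
      unfold Geo.tt
      have : (K'.card : ℤ) ≤ (Fintype.card F : ℤ) ^ 2 := by exact_mod_cast Nat.lt_succ_iff.mp hk
      linarith
    exact_mod_cast this
  have h2 := pow_le_pow_left₀ h0 h1 2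
  rw [mul_pow, Real.sq_sqrt (by norm_num)] at h2
  exact_mod_cast h2
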